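/- arXiv:2206.02863 — 4 statements merged into one kernel-verified Lean document; each statement's English description precedes it below -/
import Mathlib

section
/- Let n be a positive integer and let M be an n×n real matrix. Then there exists a real orthogonal n×n matrix B (i.e., BᵀB = I) such that ‖M ∘ B‖ = ‖M‖_S. -/
open scoped ComplexOrder

/-- The operator norm (induced by Euclidean norms) of a complex matrix. -/
noncomputable def Matrix.copNorm {m n : Type*} [Fintype m] [Fintype n] [DecidableEq n]
    (M : Matrix m n ℂ) : ℝ :=
  ‖LinearMap.toContinuousLinearMap (Matrix.toEuclideanLin M)‖

/-- The operator norm (induced by Euclidean norms) of a real matrix. -/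
noncomputable def Matrix.ropNorm {m n : Type*} [Fintype m] [Fintype n] [DecidableEq n]
    (M : Matrix m n ℝ) : ℝ :=
  ‖LinearMap.toContinuousLinearMap (Matrix.toEuclideanLin M)‖

/-- The Schur norm of a complex square matrix: the supremum of `‖M ∘ C‖` over all
complex contractions `C`, where `∘` is the entrywise (Schur/Hadamard) product. -/
noncomputable def Matrix.schurNorm {n : Type*} [Fintype n] [DecidableEq n]
    (M : Matrix n n ℂ) : ℝ :=
  sSup {x | ∃ C : Matrix n n ℂ, Matrix.copNorm C ≤ 1 ∧ x = Matrix.copNorm (Matrix.hadamard M C)}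

/-- `rSchur n`: the supremum of Schur norms of `n × n` real matrices whose entries all have
absolute value at most `1`. -/
noncomputable def rSchur (n : ℕ) : ℝ :=
  sSup {x | ∃ M : Matrix (Fin n) (Fin n) ℝ, (∀ i j, |M i j| ≤ 1) ∧
    x = Matrix.schurNorm (M.map Complex.ofReal)}

/-!
By the singular value decomposition, every matrix of norm at most `1` is a convex combination of
unitary matrices, so the convex function `R ↦ ‖M ∘ R‖` attains its maximum over the unit ball at
a unitary matrix, which is orthogonal in the real case.

For real `M`, complex contractions do no better than real ones: writing `xⱼ = pⱼ |xⱼ|` and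
`|((M ∘ C) x)ᵢ| = qᵢ ((M ∘ C) x)ᵢ` with unimodular `pⱼ`, `qᵢ`, the real contraction
`R = Re (diag(q) C diag(p))` satisfies `(M ∘ R) |x| = |(M ∘ C) x|` entrywise.
-/

section

open Matrix WithLp
open scoped Matrix.Norms.L2Operator InnerProductSpace

variable {𝕜 : Type*} [RCLike 𝕜] {m n : Type*} [Fintype m] [Fintype n] [DecidableEq n]

theorem exists_orthonormalBasis_eq_norm_smul {E : Type*} [NormedAddCommGroup E]
    [InnerProductSpace 𝕜 E] [FiniteDimensional 𝕜 E] {ι : Type*} [Fintype ι]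
    (hcard : Module.finrank 𝕜 E = Fintype.card ι) {w : ι → E}
    (hw : Pairwise fun i j => ⟪w i, w j⟫_𝕜 = 0) :
    ∃ b : OrthonormalBasis ι 𝕜 E, ∀ i, w i = (‖w i‖ : 𝕜) • b i := by
  have hon : Orthonormal 𝕜
      ({i | w i ≠ 0}.domRestrict fun i => ((‖w i‖ : 𝕜)⁻¹ • w i)) := by
    refine ⟨fun i => norm_smul_inv_norm i.2, fun i j hij => ?_⟩
    simp only [Set.domRestrict_apply, inner_smul_left, inner_smul_right,
      hw (Subtype.coe_injective.ne hij), mul_zero]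
  obtain ⟨b, hb⟩ := hon.exists_orthonormalBasis_extension_of_card_eq hcard
  refine ⟨b, fun i => ?_⟩
  by_cases hi : w i = 0
  · simp [hi]
  · rw [hb i hi, smul_inv_smul₀ (by simpa using hi)]

theorem exists_eq_unitary_mul_diagonal_of_isDiag_conjTranspose_mul_self
    {W : Matrix n n 𝕜} (hW : (Wᴴ * W).IsDiag) :
    ∃ U ∈ unitaryGroup n 𝕜, ∃ σ : n → ℝ, 0 ≤ σ ∧ W = U * diagonal fun i => (σ i : 𝕜) := by
  let w : n → EuclideanSpace 𝕜 n := fun j => toLp 2 (W.col j)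
  have horth : Pairwise fun i j => ⟪w i, w j⟫_𝕜 = 0 := fun i j hij => by
    rw [← hW hij]
    simp [w, PiLp.inner_apply, mul_apply, mul_comm]
  obtain ⟨b, hb⟩ := exists_orthonormalBasis_eq_norm_smul finrank_euclideanSpace horth
  refine ⟨_, (EuclideanSpace.basisFun n 𝕜).toMatrix_orthonormalBasis_mem_unitary b,
    fun j => ‖w j‖, fun j => norm_nonneg (w j), ?_⟩
  ext i j
  have hij : W i j = ‖w j‖ * b j i := congrFun (congrArg ofLp (hb j)) i
  simp [hij, mul_diagonal, Module.Basis.toMatrix_apply, mul_comm]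

theorem exists_singular_value_decomposition (A : Matrix n n 𝕜) :
    ∃ U ∈ unitaryGroup n 𝕜, ∃ V ∈ unitaryGroup n 𝕜, ∃ σ : n → ℝ,
      0 ≤ σ ∧ A = U * diagonal (fun i => (σ i : 𝕜)) * V := by
  have hA : (Aᴴ * A).IsHermitian := isHermitian_conjTranspose_mul_self A
  let V : Matrix n n 𝕜 := hA.eigenvectorUnitary
  have hV : V ∈ unitaryGroup n 𝕜 := hA.eigenvectorUnitary.2
  have hdiag : ((A * V)ᴴ * (A * V)).IsDiag := by
    have hspec := hA.conjStarAlgAut_star_eigenvectorUnitary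
    rw [Unitary.conjStarAlgAut_star_apply] at hspec
    rw [conjTranspose_mul, ← Matrix.mul_assoc, Matrix.mul_assoc _ Aᴴ, ← star_eq_conjTranspose V,
      hspec]
    exact isDiag_diagonal _
  obtain ⟨U, hU, σ, hσ, hAV⟩ :=
    exists_eq_unitary_mul_diagonal_of_isDiag_conjTranspose_mul_self hdiag
  refine ⟨U, hU, star V, Unitary.star_mem hV, σ, hσ, ?_⟩
  rw [← hAV, Matrix.mul_assoc, Unitary.mul_star_self_of_mem hV, Matrix.mul_one]

theorem diagonal_mem_unitaryGroup {d : n → 𝕜} (hd : ∀ i, ‖d i‖ = 1) :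
    diagonal d ∈ unitaryGroup n 𝕜 := by
  rw [mem_unitaryGroup_iff, star_eq_conjTranspose, diagonal_conjTranspose, diagonal_mul_diagonal,
    ← diagonal_one]
  congr with i
  simp [RCLike.mul_conj, hd]

theorem isLinearMap_mul_diagonal_mul {k l : Type*} (U : Matrix k n 𝕜) (V : Matrix n l 𝕜) :
    IsLinearMap ℝ fun s : n → ℝ => U * diagonal (fun i => (s i : 𝕜)) * V where
  map_add s t := by
    simp only [Pi.add_apply, RCLike.ofReal_add, ← diagonal_add, Matrix.mul_add, Matrix.add_mul]
  map_smul c s := by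
    have hdiag : diagonal (fun i => ((c • s) i : 𝕜)) = c • diagonal fun i => (s i : 𝕜) := by
      rw [← diagonal_smul]
      congr with i
      simp [RCLike.real_smul_eq_coe_mul]
    simp only [hdiag, Matrix.mul_smul, Matrix.smul_mul]

theorem mem_convexHull_unitaryGroup_of_norm_le_one {A : Matrix n n 𝕜} (hA : ‖A‖ ≤ 1) :
    A ∈ convexHull ℝ (unitaryGroup n 𝕜 : Set (Matrix n n 𝕜)) := by
  obtain ⟨U, hU, V, hV, σ, -, rfl⟩ := exists_singular_value_decomposition A
  rw [CStarRing.norm_mul_mem_unitary _ hV, CStarRing.norm_mem_unitary_mul _ hU,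
    l2_opNorm_diagonal, pi_norm_le_iff_of_nonneg zero_le_one] at hA
  let L : (n → ℝ) → Matrix n n 𝕜 := fun s => U * diagonal (fun i => (s i : 𝕜)) * V
  have hσ : σ ∈ convexHull ℝ (Set.univ.pi fun _ : n => {-1, 1}) := by
    refine mem_convexHull_pi fun i _ => ?_
    rw [convexHull_pair, segment_eq_Icc (by norm_num)]
    exact abs_le.mp (by simpa using hA i)
  have hLσ : L σ ∈ convexHull ℝ (L '' Set.univ.pi fun _ : n => {-1, 1}) :=
    (isLinearMap_mul_diagonal_mul U V).image_convexHull _ ▸ Set.mem_image_of_mem L hσ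
  refine convexHull_mono (Set.image_subset_iff.mpr fun s hs => ?_) hLσ
  refine mul_mem (mul_mem hU (diagonal_mem_unitaryGroup fun i => ?_)) hV
  obtain hi | hi : s i = -1 ∨ s i = 1 := hs i (Set.mem_univ i) <;> simp [hi]

theorem convexOn_norm_hadamard (M : Matrix m n 𝕜) :
    ConvexOn ℝ Set.univ fun R : Matrix m n 𝕜 => ‖M ⊙ R‖ := by
  refine ⟨convex_univ, fun R _ S _ a b ha hb _ => ?_⟩
  calc ‖M ⊙ (a • R + b • S)‖
      = ‖(a : 𝕜) • (M ⊙ R) + (b : 𝕜) • (M ⊙ S)‖ := by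
        simp only [hadamard_add, hadamard_smul, RCLike.real_smul_eq_coe_smul (K := 𝕜)]
    _ ≤ ‖(a : 𝕜) • (M ⊙ R)‖ + ‖(b : 𝕜) • (M ⊙ S)‖ := norm_add_le _ _
    _ = a • ‖M ⊙ R‖ + b • ‖M ⊙ S‖ := by
        simp only [norm_smul, RCLike.norm_of_nonneg ha, RCLike.norm_of_nonneg hb, smul_eq_mul]

theorem exists_unitary_forall_norm_hadamard_le (M : Matrix n n 𝕜) :
    ∃ U ∈ unitaryGroup n 𝕜, ∀ R : Matrix n n 𝕜, ‖R‖ ≤ 1 → ‖M ⊙ R‖ ≤ ‖M ⊙ U‖ := by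
  have : ProperSpace (Matrix n n 𝕜) := FiniteDimensional.proper_rclike 𝕜 _
  have hcont : Continuous fun R : Matrix n n 𝕜 => ‖M ⊙ R‖ :=
    (continuous_matrix fun i j => by simp only [hadamard_apply]; fun_prop).norm
  obtain ⟨R₀, hR₀, hmax⟩ := (isCompact_closedBall (0 : Matrix n n 𝕜) 1).exists_isMaxOn
    ⟨0, by simp⟩ hcont.continuousOn
  obtain ⟨U, hU, hle⟩ := (convexOn_norm_hadamard M).exists_ge_of_mem_convexHull
    (Set.subset_univ _)
    (mem_convexHull_unitaryGroup_of_norm_le_one (mem_closedBall_zero_iff.mp hR₀))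
  exact ⟨U, hU, fun R hR => (hmax (mem_closedBall_zero_iff.mpr hR)).trans hle⟩

theorem norm_map_re_le (A : Matrix m n 𝕜) : ‖A.map RCLike.re‖ ≤ ‖A‖ := by
  refine ContinuousLinearMap.opNorm_le_bound _ (norm_nonneg A) fun x => ?_
  let x' : EuclideanSpace 𝕜 n := toLp 2 fun j => (x j : 𝕜)
  have hre (i : m) : (A.map RCLike.re *ᵥ x) i = RCLike.re ((A *ᵥ x') i) := by
    simp [mulVec, dotProduct, x']
  have hx' : ‖x'‖ = ‖x‖ := by simp [x', EuclideanSpace.norm_eq]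
  calc ‖toLp 2 (A.map RCLike.re *ᵥ x)‖
      ≤ ‖toLp 2 (A *ᵥ x')‖ := by
        simp only [EuclideanSpace.norm_eq, hre, Real.norm_eq_abs]
        gcongr
        exact RCLike.abs_re_le_norm _
    _ ≤ ‖A‖ * ‖x'‖ := l2_opNorm_mulVec A x'
    _ = ‖A‖ * ‖x‖ := by rw [hx']

theorem norm_diagonal_mul_mul_diagonal_le [DecidableEq m] (A : Matrix m n 𝕜) {q : m → 𝕜}
    {p : n → 𝕜} (hq : ‖q‖ ≤ 1) (hp : ‖p‖ ≤ 1) : ‖diagonal q * A * diagonal p‖ ≤ ‖A‖ :=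
  calc ‖diagonal q * A * diagonal p‖
      ≤ ‖diagonal q‖ * ‖A‖ * ‖diagonal p‖ := by grw [l2_opNorm_mul, l2_opNorm_mul]
    _ = ‖q‖ * ‖A‖ * ‖p‖ := by simp only [l2_opNorm_diagonal]
    _ ≤ 1 * ‖A‖ * 1 := by gcongr
    _ = ‖A‖ := by ring

theorem exists_real_hadamard_mulVec_norm_eq (M : Matrix m n ℝ) (C : Matrix m n 𝕜) (x : n → 𝕜) :
    ∃ R : Matrix m n ℝ, ‖R‖ ≤ ‖C‖ ∧
      ∀ i, ((M ⊙ R) *ᵥ fun j => ‖x j‖) i = ‖((M.map (↑) ⊙ C) *ᵥ x) i‖ := by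
  classical
  choose p hp hpx using fun j => RCLike.exists_norm_mul_eq_self (x j)
  choose q hq hqy using fun i => RCLike.exists_norm_eq_mul_self (((M.map (↑) ⊙ C) *ᵥ x) i)
  refine ⟨(diagonal q * C * diagonal p).map RCLike.re, (norm_map_re_le _).trans <|
    norm_diagonal_mul_mul_diagonal_le C
      ((pi_norm_le_iff_of_nonneg zero_le_one).mpr fun i => (hq i).le)
      ((pi_norm_le_iff_of_nonneg zero_le_one).mpr fun j => (hp j).le), fun i => ?_⟩
  have hterm (j : n) : M i j * RCLike.re (q i * C i j * p j) * ‖x j‖ =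
      RCLike.re (q i * ((M i j : 𝕜) * C i j * x j)) := by
    rw [← RCLike.re_ofReal_mul, ← RCLike.re_mul_ofReal]
    conv_rhs => rw [← hpx j]
    ring_nf
  rw [← RCLike.ofReal_re (K := 𝕜) ‖((M.map (↑) ⊙ C) *ᵥ x) i‖, hqy]
  simp only [mulVec, dotProduct, hadamard_apply, map_apply, diagonal_mul, mul_diagonal, hterm,
    Finset.mul_sum, map_sum]

theorem norm_hadamard_le_of_forall_real {M : Matrix m n ℝ} {K : ℝ}
    (hK : ∀ R : Matrix m n ℝ, ‖R‖ ≤ 1 → ‖M ⊙ R‖ ≤ K) {C : Matrix m n 𝕜} (hC : ‖C‖ ≤ 1) :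
    ‖M.map (↑) ⊙ C‖ ≤ K := by
  have hK₀ : 0 ≤ K := (norm_nonneg _).trans (hK 0 (by simp))
  refine ContinuousLinearMap.opNorm_le_bound _ hK₀ fun x => ?_
  obtain ⟨R, hR, hRx⟩ := exists_real_hadamard_mulVec_norm_eq M C x
  let x' : EuclideanSpace ℝ n := toLp 2 fun j => ‖x j‖
  have hx' : ‖x'‖ = ‖x‖ := by simp [x', EuclideanSpace.norm_eq]
  calc ‖toLp 2 ((M.map (↑) ⊙ C) *ᵥ x)‖
      = ‖toLp 2 ((M ⊙ R) *ᵥ x')‖ := by simp [EuclideanSpace.norm_eq, x', hRx]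
    _ ≤ ‖M ⊙ R‖ * ‖x'‖ := l2_opNorm_mulVec (M ⊙ R) x'
    _ ≤ K * ‖x‖ := by
        rw [hx']
        gcongr
        exact hK R (hR.trans hC)

theorem norm_le_one_of_mem_unitary {E : Type*} [NormedRing E] [StarRing E] [CStarRing E] {U : E}
    (hU : U ∈ unitary E) : ‖U‖ ≤ 1 := by
  cases subsingleton_or_nontrivial E
  · simp [Subsingleton.elim U 0]
  · exact (CStarRing.norm_of_mem_unitary hU).le

theorem map_ofReal_mem_unitaryGroup {B : Matrix n n ℝ} (hB : B ∈ orthogonalGroup n ℝ) :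
    B.map ((↑) : ℝ → 𝕜) ∈ unitaryGroup n 𝕜 := by
  rw [mem_unitaryGroup_iff', star_eq_conjTranspose,
    ← conjTranspose_map _ fun r => by simp]
  simpa [Matrix.map_mul, star_eq_conjTranspose] using
    congrArg (fun X : Matrix n n ℝ => X.map (algebraMap ℝ 𝕜)) (mem_unitaryGroup_iff'.mp hB)

theorem orthogonal_witness_for_schur_norm_general (M : Matrix n n ℝ) :
    ∃ B : Matrix n n ℝ, B.transpose * B = 1 ∧
      Matrix.ropNorm (Matrix.hadamard M B) = Matrix.schurNorm (M.map Complex.ofReal) := by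
  obtain ⟨B, hB, hmax⟩ := exists_unitary_forall_norm_hadamard_le M
  have hle (C : Matrix n n ℂ) (hC : ‖C‖ ≤ 1) : ‖M.map Complex.ofReal ⊙ C‖ ≤ ‖M ⊙ B‖ :=
    norm_hadamard_le_of_forall_real hmax hC
  have hBC : ‖B.map Complex.ofReal‖ ≤ 1 :=
    norm_le_one_of_mem_unitary (map_ofReal_mem_unitaryGroup hB)
  have hge : ‖M ⊙ B‖ ≤ ‖M.map Complex.ofReal ⊙ B.map Complex.ofReal‖ := by
    convert! norm_map_re_le (M.map Complex.ofReal ⊙ B.map Complex.ofReal)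
    ext i j
    simp [← Complex.ofReal_mul]
  -- `copNorm` and `ropNorm` are definitionally the scoped `L2Operator` norm.
  refine ⟨B, mem_unitaryGroup_iff'.mp hB, (IsGreatest.csSup_eq ⟨?_, ?_⟩).symm⟩
  · exact ⟨B.map Complex.ofReal, hBC, hge.antisymm (hle _ hBC)⟩
  · rintro _ ⟨C, hC, rfl⟩
    exact hle C hC

end

/-- For any real square matrix `M`, the Schur norm is attained at a real orthogonal matrix. -/
theorem orthogonal_witness_for_schur_norm (n : ℕ) (hn : 0 < n)
    (M : Matrix (Fin n) (Fin n) ℝ) :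
    ∃ B : Matrix (Fin n) (Fin n) ℝ, B.transpose * B = 1 ∧
      Matrix.ropNorm (Matrix.hadamard M B) = Matrix.schurNorm (M.map Complex.ofReal) := by
  exact orthogonal_witness_for_schur_norm_general M
end

section
/- Let n be a positive integer. There exists an n×n real matrix M, all of whose entries have absolute value at most 1, with ‖M‖_S = √n, if and only if there exists an n×n Hadamard matrix. In other words, r_n = √n if and only if an n×n Hadamard matrix exists. -/
open scoped ComplexOrder

/-!
For a contraction `C` and a matrix `M` with entries of modulus at most one,
`‖M ⊙ C‖ ≤ ‖M ⊙ C‖_F ≤ ‖C‖_F ≤ √n`, where `‖·‖_F` is the Frobenius norm and the last inequality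
is `0 ≤ tr (1 - Cᴴ * C)`. If all of these are equalities, then `M ⊙ C = u vᵀ` has rank one, it has
the same moduli as `C`, and `C` is unitary. The squared moduli `|u i|² |v j|²` then sum to one along
every row and column, so they all equal `1 / n`. Hence `M` is unimodular and
`M i j = n * u i * v j * conj (C i j)`, that is, `M` is the unitary `conj C` scaled by diagonal
matrices of constant modulus, so that `Mᴴ * M = n`. Conversely, a Hadamard matrix `M` attains the
bound at `C = conj M / √n`, for which `M ⊙ C` is the all-ones matrix divided by `√n`.
-/

open scoped Matrix Matrix.Norms.L2Operator

section OperatorNorm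

variable {m n 𝕜 : Type*} [RCLike 𝕜]

theorem exists_norm_eq_one_and_norm_apply_eq_opNorm {E F : Type*} [NormedAddCommGroup E]
    [NormedSpace 𝕜 E] [FiniteDimensional 𝕜 E] [Nontrivial E] [SeminormedAddCommGroup F]
    [NormedSpace 𝕜 F] (T : E →L[𝕜] F) : ∃ x, ‖x‖ = 1 ∧ ‖T x‖ = ‖T‖ := by
  have : NormedSpace ℝ E := NormedSpace.restrictScalars ℝ 𝕜 E
  have : ProperSpace E := FiniteDimensional.proper 𝕜 E
  have hcompact : IsCompact ((fun x ↦ ‖T x‖) '' Metric.sphere 0 1) :=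
    (isCompact_sphere _ _).image (by fun_prop)
  obtain ⟨x, hx, hTx⟩ :=
    hcompact.sSup_mem ((NormedSpace.sphere_nonempty.mpr zero_le_one).image _)
  exact ⟨x, by simpa using hx, hTx.trans T.sSup_sphere_eq_norm⟩

theorem norm_sub_inner_smul_sq {E : Type*} [NormedAddCommGroup E] [InnerProductSpace 𝕜 E]
    {e : E} (he : ‖e‖ = 1) (a : E) :
    ‖a - inner 𝕜 e a • e‖ ^ 2 = ‖a‖ ^ 2 - ‖inner 𝕜 e a‖ ^ 2 := by
  have hcross : inner 𝕜 a (inner 𝕜 e a • e) = ((‖inner 𝕜 e a‖ ^ 2 : ℝ) : 𝕜) := by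
    rw [inner_smul_right, ← inner_conj_symm a e, RCLike.mul_conj, RCLike.ofReal_pow]
  rw [@norm_sub_sq 𝕜, hcross, RCLike.ofReal_re, norm_smul, he]
  ring

variable [Fintype m] [Fintype n]

theorem sum_norm_sq_sub_vecMulVec (A : Matrix m n 𝕜) {x : EuclideanSpace 𝕜 n} (hx : ‖x‖ = 1) :
    ∑ i, ∑ j, ‖(A - Matrix.vecMulVec (A *ᵥ x) (star x)) i j‖ ^ 2 =
      ∑ i, ∑ j, ‖A i j‖ ^ 2 - ‖WithLp.toLp 2 (A *ᵥ x)‖ ^ 2 := by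
  have hstar : ‖WithLp.toLp 2 (star x.ofLp)‖ = 1 := by
    simpa [EuclideanSpace.norm_eq] using hx
  rw [EuclideanSpace.norm_sq_eq, ← Finset.sum_sub_distrib]
  refine Finset.sum_congr rfl fun i _ ↦ ?_
  have hrow := norm_sub_inner_smul_sq (𝕜 := 𝕜) hstar (WithLp.toLp 2 (A i))
  simpa [EuclideanSpace.norm_sq_eq, EuclideanSpace.inner_eq_star_dotProduct, Matrix.vecMulVec_apply,
    Matrix.mulVec] using hrow

theorem trace_conjTranspose_mul_self_eq_sum_norm_sq (A : Matrix m n 𝕜) :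
    (Aᴴ * A).trace = ((∑ i, ∑ j, ‖A i j‖ ^ 2 : ℝ) : 𝕜) := by
  rw [Finset.sum_comm]
  simp [Matrix.trace, Matrix.mul_apply, RCLike.conj_mul]

variable [DecidableEq n]

theorem posSemidef_one_sub_conjTranspose_mul_self {A : Matrix m n 𝕜} (hA : ‖A‖ ≤ 1) :
    (1 - Aᴴ * A).PosSemidef := by
  refine .of_dotProduct_mulVec_nonneg
    (Matrix.isHermitian_one.sub (Matrix.isHermitian_conjTranspose_mul_self A)) fun x ↦ ?_
  have hquad : star x ⬝ᵥ (1 - Aᴴ * A) *ᵥ x =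
      ((‖WithLp.toLp 2 x‖ ^ 2 - ‖WithLp.toLp 2 (A *ᵥ x)‖ ^ 2 : ℝ) : 𝕜) := by
    rw [Matrix.sub_mulVec, Matrix.one_mulVec, dotProduct_sub, ← Matrix.mulVec_mulVec,
      Matrix.dotProduct_mulVec, ← Matrix.star_mulVec]
    simp [EuclideanSpace.norm_sq_eq, dotProduct, RCLike.conj_mul]
  rw [hquad, RCLike.ofReal_nonneg, sub_nonneg]
  gcongr
  exact (A.l2_opNorm_mulVec (WithLp.toLp 2 x)).trans (mul_le_of_le_one_left (norm_nonneg _) hA)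

theorem trace_one_sub_conjTranspose_mul_self (A : Matrix m n 𝕜) :
    (1 - Aᴴ * A).trace = ((Fintype.card n - ∑ i, ∑ j, ‖A i j‖ ^ 2 : ℝ) : 𝕜) := by
  rw [Matrix.trace_sub, Matrix.trace_one, trace_conjTranspose_mul_self_eq_sum_norm_sq]
  push_cast
  rfl

theorem sum_norm_sq_le_card {A : Matrix m n 𝕜} (hA : ‖A‖ ≤ 1) :
    ∑ i, ∑ j, ‖A i j‖ ^ 2 ≤ (Fintype.card n : ℝ) := by
  have htrace := (posSemidef_one_sub_conjTranspose_mul_self hA).trace_nonneg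
  rwa [trace_one_sub_conjTranspose_mul_self, RCLike.ofReal_nonneg, sub_nonneg] at htrace

theorem conjTranspose_mul_self_eq_one_of_sum_norm_sq_eq_card {A : Matrix m n 𝕜} (hA : ‖A‖ ≤ 1)
    (hsum : ∑ i, ∑ j, ‖A i j‖ ^ 2 = (Fintype.card n : ℝ)) : Aᴴ * A = 1 := by
  have htrace : (1 - Aᴴ * A).trace = 0 := by
    rw [trace_one_sub_conjTranspose_mul_self, hsum, sub_self, RCLike.ofReal_zero]
  exact (sub_eq_zero.mp <|
    (posSemidef_one_sub_conjTranspose_mul_self hA).trace_eq_zero_iff.mp htrace).symm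

theorem exists_sum_norm_sq_sub_vecMulVec_eq (A : Matrix m n 𝕜) :
    ∃ (u : m → 𝕜) (v : n → 𝕜), ∑ i, ∑ j, ‖(A - Matrix.vecMulVec u v) i j‖ ^ 2 =
      ∑ i, ∑ j, ‖A i j‖ ^ 2 - ‖A‖ ^ 2 := by
  obtain _ | _ := isEmpty_or_nonempty n
  · exact ⟨0, 0, by simp [Subsingleton.elim A 0]⟩
  obtain ⟨x, hx, hAx⟩ := exists_norm_eq_one_and_norm_apply_eq_opNorm
    (Matrix.toEuclideanLin A).toContinuousLinearMap
  exact ⟨A *ᵥ x, star x, (sum_norm_sq_sub_vecMulVec A hx).trans <| by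
    rw [show ‖A‖ = _ from hAx.symm]; rfl⟩

theorem l2_opNorm_sq_le_sum_norm_sq (A : Matrix m n 𝕜) : ‖A‖ ^ 2 ≤ ∑ i, ∑ j, ‖A i j‖ ^ 2 := by
  obtain ⟨u, v, huv⟩ := exists_sum_norm_sq_sub_vecMulVec_eq A
  rw [← sub_nonneg, ← huv]
  positivity

theorem exists_eq_vecMulVec_of_l2_opNorm_sq_eq {A : Matrix m n 𝕜}
    (hA : ‖A‖ ^ 2 = ∑ i, ∑ j, ‖A i j‖ ^ 2) : ∃ u v, A = Matrix.vecMulVec u v := by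
  obtain ⟨u, v, huv⟩ := exists_sum_norm_sq_sub_vecMulVec_eq A
  rw [hA, sub_self, ← Finset.sum_product', Finset.sum_eq_zero_iff_of_nonneg fun _ _ ↦ by positivity]
    at huv
  refine ⟨u, v, sub_eq_zero.mp <| Matrix.ext fun i j ↦ ?_⟩
  simpa using huv (i, j) (by simp)

end OperatorNorm

section Hadamard

variable {m n 𝕜 : Type*} [RCLike 𝕜]

theorem mem_unitary_iff_norm_eq_one {z : 𝕜} : z ∈ unitary 𝕜 ↔ ‖z‖ = 1 := by
  rw [Unitary.mem_iff_star_mul_self, RCLike.star_def, RCLike.conj_mul]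
  norm_cast
  exact pow_eq_one_iff_of_nonneg (norm_nonneg z) two_ne_zero

theorem norm_hadamard_apply_le {M : Matrix m n 𝕜} (hM : ∀ i j, ‖M i j‖ ≤ 1) (C : Matrix m n 𝕜)
    (i : m) (j : n) : ‖(M ⊙ C) i j‖ ≤ ‖C i j‖ := by
  rw [Matrix.hadamard_apply, norm_mul]
  exact mul_le_of_le_one_left (norm_nonneg _) (hM i j)

variable [Fintype m]

theorem sum_norm_sq_col_eq_one [DecidableEq n] {C : Matrix m n 𝕜} (hC : Cᴴ * C = 1) (j : n) :
    ∑ i, ‖C i j‖ ^ 2 = 1 := by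
  have hdiag := congr($hC j j)
  simp only [Matrix.mul_apply, Matrix.conjTranspose_apply, RCLike.star_def, RCLike.conj_mul,
    Matrix.one_apply_eq] at hdiag
  exact_mod_cast hdiag

variable [Fintype n]

theorem mul_eq_inv_card_of_sum_eq_one {K : Type*} [Semifield K] {p : m → K} {q : n → K}
    (hrow : ∀ i, ∑ j, p i * q j = 1) (hcol : ∀ j, ∑ i, p i * q j = 1) (i : m) (j : n) :
    p i * q j = (Fintype.card n : K)⁻¹ := by
  refine eq_inv_of_mul_eq_one_left ?_
  calc p i * q j * Fintype.card n = p i * q j * ∑ k, ∑ l, p l * q k := by simp [hcol]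
    _ = (∑ k, p i * q k) * ∑ l, p l * q j := by
      simp only [← Finset.sum_mul, ← Finset.mul_sum]; ring
    _ = 1 := by rw [hrow, hcol, one_mul]

theorem sum_norm_sq_hadamard_le {M : Matrix m n 𝕜} (hM : ∀ i j, ‖M i j‖ ≤ 1) (C : Matrix m n 𝕜) :
    ∑ i, ∑ j, ‖(M ⊙ C) i j‖ ^ 2 ≤ ∑ i, ∑ j, ‖C i j‖ ^ 2 := by
  gcongr
  exact norm_hadamard_apply_le hM C _ _

theorem norm_hadamard_apply_eq_of_sum_norm_sq_eq {M C : Matrix m n 𝕜} (hM : ∀ i j, ‖M i j‖ ≤ 1)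
    (hsum : ∑ i, ∑ j, ‖(M ⊙ C) i j‖ ^ 2 = ∑ i, ∑ j, ‖C i j‖ ^ 2) (i : m) (j : n) :
    ‖(M ⊙ C) i j‖ = ‖C i j‖ := by
  rw [← Finset.sum_product', ← Finset.sum_product', Finset.sum_eq_sum_iff_of_le fun _ _ ↦ by
    gcongr; exact norm_hadamard_apply_le hM C _ _] at hsum
  exact (pow_left_inj₀ (norm_nonneg _) (norm_nonneg _) two_ne_zero).mp (hsum (i, j) (by simp))

variable [DecidableEq n]

theorem norm_hadamard_le_sqrt_card {M C : Matrix m n 𝕜} (hM : ∀ i j, ‖M i j‖ ≤ 1) (hC : ‖C‖ ≤ 1) :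
    ‖M ⊙ C‖ ≤ √(Fintype.card n) :=
  Real.le_sqrt_of_sq_le <| calc
    ‖M ⊙ C‖ ^ 2 ≤ ∑ i, ∑ j, ‖(M ⊙ C) i j‖ ^ 2 := l2_opNorm_sq_le_sum_norm_sq _
    _ ≤ ∑ i, ∑ j, ‖C i j‖ ^ 2 := sum_norm_sq_hadamard_le hM C
    _ ≤ Fintype.card n := sum_norm_sq_le_card hC

theorem norm_sq_eq_inv_card {C : Matrix n n 𝕜} (hC : Cᴴ * C = 1) {u v : n → 𝕜}
    (huv : ∀ i j, ‖C i j‖ = ‖u i * v j‖) (i j : n) : ‖C i j‖ ^ 2 = (Fintype.card n : ℝ)⁻¹ := by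
  have hC' : Cᴴᴴ * Cᴴ = 1 := by simpa using mul_eq_one_comm.mp hC
  have hprod (i j) : ‖C i j‖ ^ 2 = ‖u i‖ ^ 2 * ‖v j‖ ^ 2 := by rw [huv, norm_mul, mul_pow]
  rw [hprod]
  refine mul_eq_inv_card_of_sum_eq_one (p := (‖u ·‖ ^ 2)) (q := (‖v ·‖ ^ 2))
    (fun i ↦ ?_) (fun j ↦ ?_) i j
  · simpa [hprod] using sum_norm_sq_col_eq_one hC' i
  · simpa [hprod] using sum_norm_sq_col_eq_one hC j

theorem isHadamard_iff_norm_eq_one_and_conjTranspose_mul_self {M : Matrix n n 𝕜} :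
    M.IsHadamard ↔ (∀ i j, ‖M i j‖ = 1) ∧ Mᴴ * M = (Fintype.card n : 𝕜) • 1 := by
  simp only [← mem_unitary_iff_norm_eq_one]
  refine ⟨fun h ↦ ⟨h.apply_mem, h.conjTranspose_mul⟩, fun ⟨hentry, hmul⟩ ↦ ?_⟩
  obtain _ | _ := isEmpty_or_nonempty n
  · exact ⟨hentry, Subsingleton.elim _ _, hmul⟩
  · refine Matrix.isHadamard_conjTranspose_iff.mp <| .of_mul_conjTranspose
      (fun i j ↦ Unitary.star_mem (hentry j i)) (by simpa using hmul) ?_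
    exact .of_ne_zero (Nat.cast_ne_zero.mpr Fintype.card_ne_zero)

theorem isHadamard_of_hadamard_eq_vecMulVec {M C : Matrix n n 𝕜} (hC : Cᴴ * C = 1)
    (hMC : ∀ i j, ‖(M ⊙ C) i j‖ = ‖C i j‖) {u v : n → 𝕜} (huv : M ⊙ C = Matrix.vecMulVec u v) :
    M.IsHadamard := by
  have hentry (i j) : M i j * C i j = u i * v j := congr($huv i j)
  have hnorm (i j) : ‖C i j‖ = ‖u i * v j‖ := by rw [← hMC, huv, Matrix.vecMulVec_apply]
  have hmodulus {z : 𝕜} {i j} (hz : ‖z‖ = ‖C i j‖) : Fintype.card n * (star z * z) = 1 := by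
    have : Nonempty n := ⟨i⟩
    rw [RCLike.star_def, RCLike.conj_mul, ← RCLike.ofReal_pow, hz, norm_sq_eq_inv_card hC hnorm]
    simp
  have hne {z : 𝕜} {i j} (hz : ‖z‖ = ‖C i j‖) : z ≠ 0 :=
    right_ne_zero_of_mul (right_ne_zero_of_mul_eq_one (hmodulus hz))
  have hM (i j) : M i j = Fintype.card n * (u i * v j) * star (C i j) := by
    have hC_modulus := hmodulus (z := C i j) rfl
    linear_combination Fintype.card n * star (C i j) * hentry i j - M i j * hC_modulus
  refine isHadamard_iff_norm_eq_one_and_conjTranspose_mul_self.mpr ⟨fun i j ↦ ?_, ?_⟩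
  · exact (mul_eq_right₀ (norm_ne_zero_iff.mpr (hne rfl))).mp ((norm_mul _ _).symm.trans (hMC i j))
  have hgram (i j k) :
      v j * (star (M i j) * M i k) = Fintype.card n * v k * (star (C i k) * C i j) := by
    have huv_modulus := hmodulus (hnorm i j).symm
    simp only [hM, star_mul', star_star, star_natCast] at huv_modulus ⊢
    linear_combination Fintype.card n * v k * C i j * star (C i k) * huv_modulus
  ext j k
  refine mul_left_cancel₀ (right_ne_zero_of_mul (hne (hnorm j j).symm)) ?_
  calc v j * (Mᴴ * M) j k = Fintype.card n * v k * (Cᴴ * C) k j := by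
        simp only [Matrix.mul_apply, Matrix.conjTranspose_apply, Finset.mul_sum, hgram]
    _ = v j * ((Fintype.card n : 𝕜) • (1 : Matrix n n 𝕜)) j k := by
        obtain rfl | hjk := eq_or_ne j k
        · simp [hC, mul_comm]
        · simp [hC, hjk, hjk.symm]

theorem isHadamard_of_norm_hadamard_eq_sqrt_card {M C : Matrix n n 𝕜} (hM : ∀ i j, ‖M i j‖ ≤ 1)
    (hC : ‖C‖ ≤ 1) (hMC : ‖M ⊙ C‖ = √(Fintype.card n)) : M.IsHadamard := by
  have hop : ‖M ⊙ C‖ ^ 2 = Fintype.card n := by rw [hMC, Real.sq_sqrt (Nat.cast_nonneg _)]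
  have hop_le := l2_opNorm_sq_le_sum_norm_sq (M ⊙ C)
  have hentry_le := sum_norm_sq_hadamard_le hM C
  have hcard_le := sum_norm_sq_le_card hC
  have hunitary : Cᴴ * C = 1 :=
    conjTranspose_mul_self_eq_one_of_sum_norm_sq_eq_card hC (by linarith)
  have hmoduli := norm_hadamard_apply_eq_of_sum_norm_sq_eq hM (C := C) (by linarith)
  obtain ⟨u, v, huv⟩ := exists_eq_vecMulVec_of_l2_opNorm_sq_eq (A := M ⊙ C) (by linarith)
  exact isHadamard_of_hadamard_eq_vecMulVec hunitary hmoduli huv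

theorem l2_opNorm_of_one : ‖(.of 1 : Matrix n n 𝕜)‖ = Fintype.card n := by
  obtain _ | _ := isEmpty_or_nonempty n
  · simp [Subsingleton.elim (.of 1 : Matrix n n 𝕜) 0]
  have hne : (.of 1 : Matrix n n 𝕜) ≠ 0 := fun h ↦ by
    simpa using congr($h (Classical.arbitrary n) (Classical.arbitrary n))
  have hsq : (.of 1 : Matrix n n 𝕜)ᴴ * .of 1 = (Fintype.card n : 𝕜) • .of 1 := by
    ext; simp [Matrix.mul_apply]
  have hnorm := Matrix.l2_opNorm_conjTranspose_mul_self (.of 1 : Matrix n n 𝕜)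
  rw [hsq, norm_smul, RCLike.norm_natCast] at hnorm
  exact (mul_right_cancel₀ (norm_ne_zero_iff.mpr hne) hnorm).symm

theorem l2_opNorm_eq_sqrt_card_of_isHadamard {M : Matrix n n 𝕜} (hM : M.IsHadamard) :
    ‖M‖ = √(Fintype.card n) := by
  obtain _ | _ := isEmpty_or_nonempty n
  · simp [Subsingleton.elim M 0]
  rw [eq_comm, Real.sqrt_eq_iff_mul_self_eq (Nat.cast_nonneg _) (norm_nonneg _),
    ← Matrix.l2_opNorm_conjTranspose_mul_self, hM.conjTranspose_mul, norm_smul,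
    RCLike.norm_natCast, CStarRing.norm_one, mul_one]

end Hadamard

section SchurNorm

variable {n : Type*} [Fintype n] [DecidableEq n]

theorem copNorm_eq_l2_opNorm {m : Type*} [Fintype m] (A : Matrix m n ℂ) : A.copNorm = ‖A‖ := rfl

theorem isGreatest_schurNorm (M : Matrix n n ℂ) :
    IsGreatest ((fun C ↦ ‖M ⊙ C‖) '' Metric.closedBall 0 1) M.schurNorm := by
  have : ProperSpace (Matrix n n ℂ) := FiniteDimensional.proper ℂ _
  have hcont : Continuous (M ⊙ ·) :=
    continuous_matrix fun i j ↦ continuous_const.mul (continuous_id.matrix_elem i j)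
  have hcompact : IsCompact ((fun C ↦ ‖M ⊙ C‖) '' Metric.closedBall 0 1) :=
    (isCompact_closedBall _ _).image hcont.norm
  have hset : {x | ∃ C : Matrix n n ℂ, C.copNorm ≤ 1 ∧ x = (M ⊙ C).copNorm} =
      (fun C ↦ ‖M ⊙ C‖) '' Metric.closedBall 0 1 := by
    ext x
    simp [copNorm_eq_l2_opNorm, eq_comm]
  rw [Matrix.schurNorm, hset]
  exact hcompact.isGreatest_sSup ((Metric.nonempty_closedBall.mpr zero_le_one).image _)

theorem schurNorm_le_sqrt_card {M : Matrix n n ℂ} (hM : ∀ i j, ‖M i j‖ ≤ 1) :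
    M.schurNorm ≤ √(Fintype.card n) := by
  obtain ⟨C, hC, hMC⟩ := (isGreatest_schurNorm M).1
  exact hMC ▸ norm_hadamard_le_sqrt_card hM (mem_closedBall_zero_iff.mp hC)

theorem isHadamard_of_schurNorm_eq_sqrt_card {M : Matrix n n ℂ} (hM : ∀ i j, ‖M i j‖ ≤ 1)
    (hS : M.schurNorm = √(Fintype.card n)) : M.IsHadamard := by
  obtain ⟨C, hC, hMC⟩ := (isGreatest_schurNorm M).1
  exact isHadamard_of_norm_hadamard_eq_sqrt_card hM (mem_closedBall_zero_iff.mp hC) (hMC.trans hS)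

theorem sqrt_card_le_schurNorm_of_isHadamard {M : Matrix n n ℂ} (hM : M.IsHadamard) :
    √(Fintype.card n) ≤ M.schurNorm := by
  let c : ℂ := ((√(Fintype.card n))⁻¹ : ℝ)
  have hc : ‖c‖ = (√(Fintype.card n))⁻¹ := by simp [c]
  have hcontr : ‖c • Mᴴᵀ‖ ≤ 1 := by
    rw [norm_smul, hc, l2_opNorm_eq_sqrt_card_of_isHadamard hM.conjTranspose.transpose]
    exact inv_mul_le_one
  have hconj : M ⊙ Mᴴᵀ = .of 1 :=
    Matrix.ext fun i j ↦ Unitary.mul_star_self_of_mem (hM.apply_mem i j)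
  calc √(Fintype.card n) = ‖M ⊙ (c • Mᴴᵀ)‖ := by
        rw [Matrix.hadamard_smul, hconj, norm_smul, hc, l2_opNorm_of_one, inv_mul_eq_div,
          Real.div_sqrt]
    _ ≤ M.schurNorm := (isGreatest_schurNorm M).2 ⟨_, mem_closedBall_zero_iff.mpr hcontr, rfl⟩

theorem isHadamard_map_ofReal_iff {H : Matrix n n ℝ} :
    (H.map Complex.ofReal).IsHadamard ↔
      (∀ i j, H i j = 1 ∨ H i j = -1) ∧ Hᵀ * H = (Fintype.card n : ℝ) • 1 := by
  have hmap : (H.map Complex.ofReal)ᴴ * H.map Complex.ofReal = (Hᵀ * H).map Complex.ofReal := by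
    ext; simp [Matrix.mul_apply]
  have hone : (Fintype.card n : ℂ) • (1 : Matrix n n ℂ) =
      ((Fintype.card n : ℝ) • (1 : Matrix n n ℝ)).map Complex.ofReal := by
    ext i j
    obtain rfl | hij := eq_or_ne i j <;> simp [*]
  rw [isHadamard_iff_norm_eq_one_and_conjTranspose_mul_self, hmap, hone,
    (Matrix.map_injective Complex.ofReal_injective).eq_iff]
  simp [abs_eq zero_le_one]

theorem rn_eq_sqrt_iff_hadamard_general (M : Matrix n n ℂ) :
    ((∀ i j, ‖M i j‖ ≤ 1) ∧ M.schurNorm = √(Fintype.card n)) ↔ M.IsHadamard := by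
  refine ⟨fun ⟨hM, hS⟩ ↦ isHadamard_of_schurNorm_eq_sqrt_card hM hS, fun hM ↦ ?_⟩
  have hle (i j) : ‖M i j‖ ≤ 1 := (mem_unitary_iff_norm_eq_one.mp (hM.apply_mem i j)).le
  exact ⟨hle, (schurNorm_le_sqrt_card hle).antisymm (sqrt_card_le_schurNorm_of_isHadamard hM)⟩

end SchurNorm

/-- There is an `n × n` real matrix with entries of absolute value at most `1` whose Schur
norm equals `√n` if and only if there exists an `n × n` Hadamard matrix (a `±1` matrix `H`
with `Hᵀ * H = n • I`). -/
theorem rn_eq_sqrt_iff_hadamard (n : ℕ) (hn : 0 < n) :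
    (∃ M : Matrix (Fin n) (Fin n) ℝ, (∀ i j, |M i j| ≤ 1) ∧
        Matrix.schurNorm (M.map Complex.ofReal) = Real.sqrt n) ↔
      ∃ H : Matrix (Fin n) (Fin n) ℝ, (∀ i j, H i j = 1 ∨ H i j = -1) ∧
        H.transpose * H = (n : ℝ) • 1 :=
  exists_congr fun M ↦ by
    simpa using (rn_eq_sqrt_iff_hadamard_general (M.map Complex.ofReal)).trans
      isHadamard_map_ofReal_iff
end

section
/- The limit of r_n/√n as n → ∞ equals 1. -/
open scoped ComplexOrder

/-!
Since each column of a contraction `C` has norm at most `1`, a matrix `M` with entries bounded by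
`1` satisfies `‖M ∘ C‖ ≤ ‖M ∘ C‖_F ≤ ‖C‖_F ≤ √n`, so `r_n ≤ √n`. Conversely, for a Hadamard matrix
`H` of order `m` the matrix `C = conj H / √m` is a contraction and `H ∘ C` is the all-ones matrix
divided by `√m`, which has norm `√m`; hence `r_m = √m`. As `r_n` increases with `n`, it remains to
find Hadamard orders `m ≤ n` with `m ~ n`. Kronecker products give all the orders `2 ^ k * 12 ^ l`,
and these suffice because `log 2 / log 12` is irrational: `ℤ log 2 + ℤ log 12` is dense in `ℝ`, so
far from the origin the gaps in `ℕ log 2 + ℕ log 12` become arbitrarily small.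
-/

open Filter Matrix
open scoped Matrix.Norms.L2Operator

lemma conjTranspose_mul_one_submatrix_of_injective {R m n : Type*} [Semiring R] [StarRing R]
    [Fintype n] [DecidableEq m] [DecidableEq n] {e : m → n} (he : e.Injective) :
    ((1 : Matrix n n R).submatrix id e)ᴴ * (1 : Matrix n n R).submatrix id e = 1 := by
  ext i j
  simp [mul_apply, one_apply, he.eq_iff]

section OperatorNorm

variable {𝕜 m n : Type*} [RCLike 𝕜] [Fintype m] [Fintype n] [DecidableEq n]

lemma l2_opNorm_one_le : ‖(1 : Matrix n n 𝕜)‖ ≤ 1 := by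
  rw [← diagonal_one, l2_opNorm_diagonal]
  exact (pi_norm_le_iff_of_nonneg zero_le_one).mpr fun _ ↦ norm_one.le

lemma sum_norm_sq_col_le_l2_opNorm_sq (A : Matrix m n 𝕜) (j : n) :
    ∑ i, ‖A i j‖ ^ 2 ≤ ‖A‖ ^ 2 := by
  have hcol := A.l2_opNorm_mulVec (EuclideanSpace.single j 1)
  rw [PiLp.norm_single, norm_one, mul_one] at hcol
  simpa [EuclideanSpace.norm_sq_eq] using pow_le_pow_left₀ (norm_nonneg _) hcol 2

lemma l2_opNorm_le_sqrt_sum_norm_sq (A : Matrix m n 𝕜) :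
    ‖A‖ ≤ √(∑ i, ∑ j, ‖A i j‖ ^ 2) := by
  refine ContinuousLinearMap.opNorm_le_bound _ (Real.sqrt_nonneg _) fun x ↦ ?_
  rw [← Real.sqrt_sq (norm_nonneg x), ← Real.sqrt_mul (by positivity)]
  refine Real.le_sqrt_of_sq_le ?_
  rw [EuclideanSpace.norm_sq_eq, EuclideanSpace.norm_sq_eq, Finset.sum_mul]
  refine Finset.sum_le_sum fun i _ ↦ ?_
  calc ‖∑ j, A i j * x j‖ ^ 2
      ≤ (∑ j, ‖A i j‖ * ‖x j‖) ^ 2 := by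
        gcongr
        exact (norm_sum_le _ _).trans_eq (by simp only [norm_mul])
    _ ≤ (∑ j, ‖A i j‖ ^ 2) * ∑ j, ‖x j‖ ^ 2 := Finset.sum_mul_sq_le_sq_mul_sq _ _ _

lemma l2_opNorm_hadamard_le {M : Matrix m n 𝕜} {K : ℝ} (hK : 0 ≤ K) (hM : ∀ i j, ‖M i j‖ ≤ K)
    (C : Matrix m n 𝕜) : ‖M ⊙ C‖ ≤ K * √(Fintype.card n) * ‖C‖ := by
  refine (l2_opNorm_le_sqrt_sum_norm_sq _).trans (Real.sqrt_le_iff.mpr ⟨by positivity, ?_⟩)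
  calc ∑ i, ∑ j, ‖M i j * C i j‖ ^ 2
      ≤ ∑ i, ∑ j, K ^ 2 * ‖C i j‖ ^ 2 := by
        gcongr with i _ j
        rw [norm_mul, mul_pow]
        gcongr
        exact hM i j
    _ = K ^ 2 * ∑ j, ∑ i, ‖C i j‖ ^ 2 := by rw [Finset.sum_comm]; simp only [Finset.mul_sum]
    _ ≤ K ^ 2 * ∑ _j : n, ‖C‖ ^ 2 := by
        gcongr with j
        exact sum_norm_sq_col_le_l2_opNorm_sq C j
    _ = (K * √(Fintype.card n) * ‖C‖) ^ 2 := by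
        rw [mul_pow, mul_pow, Real.sq_sqrt (Nat.cast_nonneg _), Finset.sum_const,
          Finset.card_univ, nsmul_eq_mul, mul_assoc]

lemma l2_opNorm_one_submatrix_le [DecidableEq m] {e : m → n} (he : e.Injective) :
    ‖(1 : Matrix n n 𝕜).submatrix id e‖ ≤ 1 := by
  rw [← abs_norm, abs_le_one_iff_mul_self_le_one, ← l2_opNorm_conjTranspose_mul_self,
    conjTranspose_mul_one_submatrix_of_injective he]
  exact l2_opNorm_one_le

lemma l2_opNorm_mul_mul_le [DecidableEq m] {A : Matrix n m 𝕜} {B : Matrix m n 𝕜} (hA : ‖A‖ ≤ 1)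
    (hB : ‖B‖ ≤ 1) (X : Matrix m m 𝕜) : ‖A * X * B‖ ≤ ‖X‖ :=
  calc ‖A * X * B‖ ≤ ‖A‖ * ‖X‖ * ‖B‖ := by grw [l2_opNorm_mul, l2_opNorm_mul]
    _ ≤ 1 * ‖X‖ * 1 := by gcongr
    _ = ‖X‖ := by rw [one_mul, mul_one]

lemma card_le_l2_opNorm_allOnes : (Fintype.card n : ℝ) ≤ ‖(.of fun _ _ ↦ 1 : Matrix n n 𝕜)‖ := by
  set J : Matrix n n 𝕜 := .of fun _ _ ↦ 1 with hJ
  cases isEmpty_or_nonempty n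
  · simp
  have hJJ : J * J = (Fintype.card n : 𝕜) • J := by
    ext
    simp [hJ, mul_apply]
  have hJpos : 0 < ‖J‖ := by
    obtain ⟨i⟩ := ‹Nonempty n›
    exact norm_pos_iff.mpr fun h ↦ one_ne_zero (congr_fun₂ h i i)
  refine le_of_mul_le_mul_right ?_ hJpos
  calc (Fintype.card n : ℝ) * ‖J‖ = ‖J * J‖ := by rw [hJJ, norm_smul, RCLike.norm_natCast]
    _ ≤ ‖J‖ * ‖J‖ := norm_mul_le J J

lemma l2_opNorm_le_sqrt_card_of_isHadamard {H : Matrix n n 𝕜} (hH : H.IsHadamard) :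
    ‖H‖ ≤ √(Fintype.card n) := by
  refine Real.le_sqrt_of_sq_le ?_
  calc ‖H‖ ^ 2 = Fintype.card n * ‖(1 : Matrix n n 𝕜)‖ := by
        rw [sq, ← l2_opNorm_conjTranspose_mul_self, hH.conjTranspose_mul, norm_smul,
          RCLike.norm_natCast]
    _ ≤ Fintype.card n := mul_le_of_le_one_right (Nat.cast_nonneg _) l2_opNorm_one_le

end OperatorNorm

section SchurNorm

variable {m n : Type*} [Fintype m] [Fintype n] [DecidableEq m] [DecidableEq n]

lemma schurNorm_nonneg (M : Matrix n n ℂ) : 0 ≤ M.schurNorm := by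
  refine Real.sSup_nonneg ?_
  rintro _ ⟨C, -, rfl⟩
  exact norm_nonneg (M ⊙ C)

lemma schurNorm_le {M : Matrix n n ℂ} {b : ℝ} (hb : 0 ≤ b)
    (h : ∀ C : Matrix n n ℂ, ‖C‖ ≤ 1 → ‖M ⊙ C‖ ≤ b) : M.schurNorm ≤ b := by
  refine Real.sSup_le ?_ hb
  rintro _ ⟨C, hC, rfl⟩
  exact h C hC

lemma schurNorm_le_mul_sqrt_card {M : Matrix n n ℂ} {K : ℝ} (hK : 0 ≤ K)
    (hM : ∀ i j, ‖M i j‖ ≤ K) : M.schurNorm ≤ K * √(Fintype.card n) :=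
  schurNorm_le (by positivity) fun C hC ↦
    (l2_opNorm_hadamard_le hK hM C).trans (mul_le_of_le_one_right (by positivity) hC)

lemma l2_opNorm_hadamard_le_schurNorm (M : Matrix n n ℂ) {C : Matrix n n ℂ} (hC : ‖C‖ ≤ 1) :
    ‖M ⊙ C‖ ≤ M.schurNorm := by
  have hM (i j) : ‖M i j‖ ≤ ∑ i, ∑ j, ‖M i j‖ :=
    (Finset.single_le_sum (f := fun j ↦ ‖M i j‖) (by intros; positivity)
      (Finset.mem_univ j)).trans <|
      Finset.single_le_sum (f := fun i ↦ ∑ j, ‖M i j‖) (by intros; positivity)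
        (Finset.mem_univ i)
  refine le_csSup ⟨(∑ i, ∑ j, ‖M i j‖) * √(Fintype.card n), ?_⟩ ⟨C, hC, rfl⟩
  rintro _ ⟨D, hD, rfl⟩
  exact (l2_opNorm_hadamard_le (by positivity) hM D).trans
    (mul_le_of_le_one_right (by positivity) hD)

theorem schurNorm_submatrix_le {e : m → n} (he : e.Injective) (M : Matrix n n ℂ) :
    (M.submatrix e e).schurNorm ≤ M.schurNorm := by
  refine schurNorm_le (schurNorm_nonneg M) fun C hC ↦ ?_
  set P : Matrix n m ℂ := (1 : Matrix n n ℂ).submatrix id e with hP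
  have hPnorm : ‖P‖ ≤ 1 := l2_opNorm_one_submatrix_le he
  have hPstar : ‖Pᴴ‖ ≤ 1 := (l2_opNorm_conjTranspose P).trans_le hPnorm
  have submatrix_eq (X : Matrix n n ℂ) : X.submatrix e e = Pᴴ * X * P := by
    ext i j
    simp [hP, mul_apply, one_apply]
  have hC_eq : C = (P * C * Pᴴ).submatrix e e := by
    have hPP : Pᴴ * P = 1 := conjTranspose_mul_one_submatrix_of_injective he
    rw [submatrix_eq, Matrix.mul_assoc P C, ← Matrix.mul_assoc Pᴴ P, hPP, Matrix.one_mul,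
      Matrix.mul_assoc, hPP, Matrix.mul_one]
  calc ‖M.submatrix e e ⊙ C‖ = ‖Pᴴ * (M ⊙ (P * C * Pᴴ)) * P‖ := by
        rw [← submatrix_eq, submatrix_hadamard, ← hC_eq]
    _ ≤ ‖M ⊙ (P * C * Pᴴ)‖ := l2_opNorm_mul_mul_le hPstar hPnorm _
    _ ≤ M.schurNorm :=
      l2_opNorm_hadamard_le_schurNorm M ((l2_opNorm_mul_mul_le hPnorm hPstar C).trans hC)

theorem sqrt_card_le_schurNorm_of_isHadamard_s13 {H : Matrix n n ℂ} (hH : H.IsHadamard) :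
    √(Fintype.card n) ≤ H.schurNorm := by
  set s : ℝ := √(Fintype.card n)
  set C : Matrix n n ℂ := ((s⁻¹ : ℝ) : ℂ) • Hᴴᵀ with hC
  have norm_smul_inv (X : Matrix n n ℂ) : ‖((s⁻¹ : ℝ) : ℂ) • X‖ = s⁻¹ * ‖X‖ := by
    rw [norm_smul, Complex.norm_of_nonneg (by positivity)]
  have hCnorm : ‖C‖ ≤ 1 := by
    rw [norm_smul_inv]
    exact inv_mul_le_one_of_le₀
      (l2_opNorm_le_sqrt_card_of_isHadamard hH.conjTranspose.transpose) (Real.sqrt_nonneg _)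
  have hHC : H ⊙ C = ((s⁻¹ : ℝ) : ℂ) • .of fun _ _ ↦ 1 := by
    ext i j
    have hij : H i j * star (H i j) = 1 := Unitary.mul_star_self_of_mem (hH.apply_mem i j)
    simp only [hC, hadamard_apply, Matrix.smul_apply, transpose_apply, conjTranspose_apply,
      of_apply, smul_eq_mul, mul_left_comm (H i j), hij]
  calc s = s⁻¹ * Fintype.card n := by
        rw [inv_mul_eq_div, Real.div_sqrt]
    _ ≤ s⁻¹ * ‖(.of fun _ _ ↦ 1 : Matrix n n ℂ)‖ := by
        gcongr
        exact card_le_l2_opNorm_allOnes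
    _ = ‖H ⊙ C‖ := by rw [hHC, norm_smul_inv]
    _ ≤ H.schurNorm := l2_opNorm_hadamard_le_schurNorm H hCnorm

end SchurNorm

section RSchur

variable {n : ℕ}

lemma schurNorm_map_ofReal_le_sqrt {M : Matrix (Fin n) (Fin n) ℝ} (hM : ∀ i j, |M i j| ≤ 1) :
    (M.map Complex.ofReal).schurNorm ≤ √n := by
  simpa using
    schurNorm_le_mul_sqrt_card zero_le_one (M := M.map Complex.ofReal) (by simpa using hM)

theorem rSchur_le_sqrt (n : ℕ) : rSchur n ≤ √n := by
  refine Real.sSup_le ?_ (Real.sqrt_nonneg _)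
  rintro _ ⟨M, hM, rfl⟩
  exact schurNorm_map_ofReal_le_sqrt hM

lemma schurNorm_map_ofReal_le_rSchur {M : Matrix (Fin n) (Fin n) ℝ} (hM : ∀ i j, |M i j| ≤ 1) :
    (M.map Complex.ofReal).schurNorm ≤ rSchur n := by
  refine le_csSup ⟨√n, ?_⟩ ⟨M, hM, rfl⟩
  rintro _ ⟨M, hM, rfl⟩
  exact schurNorm_map_ofReal_le_sqrt hM

lemma rSchur_nonneg (n : ℕ) : 0 ≤ rSchur n := by
  refine Real.sSup_nonneg ?_
  rintro _ ⟨M, -, rfl⟩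
  exact schurNorm_nonneg _

-- A retraction `r` of `Fin n` onto `Fin m` repeats rows and columns, so that `M` is a submatrix of
-- an `n × n` matrix with the same entries.
theorem rSchur_mono : Monotone rSchur := by
  intro m n hmn
  refine Real.sSup_le ?_ (rSchur_nonneg n)
  rintro _ ⟨M, hM, rfl⟩
  obtain rfl | hm := m.eq_zero_or_pos
  · exact (schurNorm_map_ofReal_le_sqrt hM).trans (by simpa using rSchur_nonneg n)
  have : Nonempty (Fin m) := ⟨⟨0, hm⟩⟩
  obtain ⟨r, hr⟩ := (Fin.castLE_injective hmn).hasLeftInverse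
  calc (M.map Complex.ofReal).schurNorm
      = (((M.submatrix r r).map Complex.ofReal).submatrix
          (Fin.castLE hmn) (Fin.castLE hmn)).schurNorm := by
        rw [submatrix_map, submatrix_submatrix, hr.comp_eq_id, submatrix_id_id]
    _ ≤ ((M.submatrix r r).map Complex.ofReal).schurNorm :=
        schurNorm_submatrix_le (Fin.castLE_injective hmn) _
    _ ≤ rSchur n := schurNorm_map_ofReal_le_rSchur fun i j ↦ hM (r i) (r j)

end RSchur

section HadamardOrders

lemma isHadamard_map {n R S : Type*} [Fintype n] [DecidableEq n] [Semiring R] [StarRing R]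
    [Semiring S] [StarRing S] {A : Matrix n n R} (hA : A.IsHadamard) (f : R →+* S)
    (hf : Function.Semiconj f star star) : (A.map f).IsHadamard := by
  have map_card : ((Fintype.card n : R) • (1 : Matrix n n R)).map f =
      (Fintype.card n : S) • (1 : Matrix n n S) := by
    ext i j
    simp [one_apply, apply_ite f]
  refine ⟨fun i j ↦ ?_, ?_, ?_⟩
  · obtain ⟨hl, hr⟩ := Unitary.mem_iff.mp (hA.apply_mem i j)
    rw [Unitary.mem_iff, map_apply, ← hf, ← map_mul, ← map_mul, hl, hr, map_one]
    exact ⟨rfl, rfl⟩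
  · rw [← conjTranspose_map f hf, ← Matrix.map_mul, hA.mul_conjTranspose, map_card]
  · rw [← conjTranspose_map f hf, ← Matrix.map_mul, hA.conjTranspose_mul, map_card]

/-- The orders of Hadamard matrices with entries `±1`, as a multiplicative submonoid of `ℕ`.
It contains `0`, the order of the empty matrix. -/
def hadamardOrders : Submonoid ℕ where
  carrier := {n | ∃ H : Matrix (Fin n) (Fin n) ℤ, H.IsHadamard}
  one_mem' := ⟨1, by simp only [isHadamard_iff, Unitary.mem_iff]; decide⟩
  mul_mem' := by
    rintro m n ⟨H, hH⟩ ⟨K, hK⟩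
    exact ⟨_, (hH.kronecker hK).reindex finProdFinEquiv finProdFinEquiv⟩

lemma card_mem_hadamardOrders {n : Type*} [Fintype n] [DecidableEq n] {H : Matrix n n ℤ}
    (hH : H.IsHadamard) : Fintype.card n ∈ hadamardOrders :=
  ⟨_, hH.reindex (Fintype.equivFin n) (Fintype.equivFin n)⟩

lemma two_mem_hadamardOrders : 2 ∈ hadamardOrders :=
  ⟨!![1, 1; 1, -1], by simp only [isHadamard_iff, Unitary.mem_iff]; decide⟩

/-- Paley's Hadamard matrix of order `12`, built from the quadratic residues modulo `11`.
The zero residue counts as a square, which puts the sign `+1` on the diagonal. -/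
def paleyMatrix : Matrix (Unit ⊕ ZMod 11) (Unit ⊕ ZMod 11) ℤ :=
  fromBlocks 1 (.of fun _ _ ↦ 1) (.of fun _ _ ↦ -1)
    (circulant fun x ↦ if IsSquare x then 1 else -1)

lemma isHadamard_paleyMatrix : paleyMatrix.IsHadamard := by
  simp only [isHadamard_iff, Unitary.mem_iff]
  decide +kernel

lemma twelve_mem_hadamardOrders : 12 ∈ hadamardOrders :=
  card_mem_hadamardOrders isHadamard_paleyMatrix

theorem sqrt_le_rSchur_of_mem_hadamardOrders {m : ℕ} (hm : m ∈ hadamardOrders) :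
    √m ≤ rSchur m := by
  obtain ⟨H, hH⟩ := hm
  have hsign (i j) : |((H i j : ℤ) : ℝ)| ≤ 1 := by
    obtain h | h := Unitary.mem_iff_eq_one_or_eq_neg_one.mp (hH.apply_mem i j) <;> simp [h]
  have hHℂ : ((H.map (Int.cast : ℤ → ℝ)).map Complex.ofReal).IsHadamard := by
    convert isHadamard_map hH (Int.castRingHom ℂ) fun _ ↦ by simp using 1
    ext
    simp
  calc √m = √(Fintype.card (Fin m)) := by rw [Fintype.card_fin]
    _ ≤ ((H.map (Int.cast : ℤ → ℝ)).map Complex.ofReal).schurNorm :=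
        sqrt_card_le_schurNorm_of_isHadamard_s13 hHℂ
    _ ≤ rSchur m := schurNorm_map_ofReal_le_rSchur hsign

end HadamardOrders

section GapsInMonoids

lemma exists_sub_eq_of_mem_closure {G : Type*} [AddCommGroup G] {S : AddSubmonoid G} {g : G}
    (hg : g ∈ AddSubgroup.closure (S : Set G)) : ∃ x ∈ S, ∃ y ∈ S, y - x = g := by
  induction hg using AddSubgroup.closure_induction with
  | mem y hy => exact ⟨0, S.zero_mem, y, hy, sub_zero y⟩
  | zero => exact ⟨0, S.zero_mem, 0, S.zero_mem, sub_zero 0⟩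
  | add g g' _ _ ih ih' =>
    obtain ⟨x, hx, y, hy, rfl⟩ := ih
    obtain ⟨x', hx', y', hy', rfl⟩ := ih'
    exact ⟨x + x', S.add_mem hx hx', y + y', S.add_mem hy hy', add_sub_add_comm y y' x x'⟩
  | neg g _ ih =>
    obtain ⟨x, hx, y, hy, rfl⟩ := ih
    exact ⟨y, hy, x, hx, (neg_sub y x).symm⟩

lemma exists_nat_mul_le_lt {u t : ℝ} (hu : 0 < u) (ht : 0 ≤ t) :
    ∃ k : ℕ, k * u ≤ t ∧ t < k * u + u := by
  refine ⟨⌊t / u⌋₊, (le_div_iff₀ hu).mp (Nat.floor_le (by positivity)), ?_⟩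
  have := (div_lt_iff₀ hu).mp (Nat.lt_floor_add_one (t / u))
  rwa [add_one_mul] at this

-- For `t ∈ [k x, (k + 1) x)`, replacing `j` of the `k` summands `x` by `y` climbs from `k x`
-- towards `t` in steps of `y - x`; there are enough summands once `k ≥ x / (y - x)`.
lemma eventually_exists_mem_Ioc_of_sub_le {S : AddSubmonoid ℝ} {x y δ : ℝ} (hx : x ∈ S)
    (hy : y ∈ S) (hx0 : 0 < x) (hxy : x < y) (hδ : y - x ≤ δ) :
    ∀ᶠ t in atTop, ∃ s ∈ S, s ∈ Set.Ioc (t - δ) t := by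
  have hu : 0 < y - x := sub_pos.mpr hxy
  filter_upwards [eventually_ge_atTop (x / (y - x) * x + x)] with t ht
  have ht0 : 0 ≤ t := le_trans (by positivity) ht
  obtain ⟨k, hk_le, hk_lt⟩ := exists_nat_mul_le_lt hx0 ht0
  obtain ⟨j, hj_le, hj_lt⟩ := exists_nat_mul_le_lt hu (sub_nonneg.mpr hk_le)
  have hjk : j ≤ k := by
    have hj : (j : ℝ) ≤ x / (y - x) := (le_div_iff₀ hu).mpr (by linarith)
    have hk : x / (y - x) ≤ k := le_of_mul_le_mul_right (by linarith) hx0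
    exact_mod_cast hj.trans hk
  have hs : (k - j) • x + j • y = k * x + j * (y - x) := by
    rw [nsmul_eq_mul, nsmul_eq_mul, Nat.cast_sub hjk]
    ring
  refine ⟨(k - j) • x + j • y, S.add_mem (S.nsmul_mem hx _) (S.nsmul_mem hy _), ?_⟩
  rw [hs]
  constructor <;> linarith

theorem eventually_exists_mem_Ioc_of_dense_closure {S : AddSubmonoid ℝ}
    (hS : Dense (AddSubgroup.closure (S : Set ℝ) : Set ℝ)) {p : ℝ} (hp : p ∈ S) (hp0 : 0 < p)
    {δ : ℝ} (hδ : 0 < δ) : ∀ᶠ t in atTop, ∃ s ∈ S, s ∈ Set.Ioc (t - δ) t := by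
  obtain ⟨g, hg, hg0, hgδ⟩ := hS.exists_between hδ
  obtain ⟨x, hx, y, hy, rfl⟩ := exists_sub_eq_of_mem_closure hg
  obtain ⟨k, hk⟩ := exists_lt_nsmul hp0 (-x)
  have hkp := S.nsmul_mem hp k
  exact eventually_exists_mem_Ioc_of_sub_le (S.add_mem hkp hx) (S.add_mem hkp hy)
    (neg_lt_iff_pos_add.mp hk) (by linarith) (by linarith)

theorem irrational_log_div_log {a b p : ℕ} (hp : p.Prime) (ha : 1 < a) (hpa : ¬p ∣ a) (hb : b ≠ 0)
    (hpb : p ∣ b) : Irrational (Real.log a / Real.log b) := by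
  have hlog_a : 0 < Real.log a := Real.log_pos (by exact_mod_cast ha)
  have hb1 : 1 < b := hp.one_lt.trans_le (Nat.le_of_dvd hb.bot_lt hpb)
  have hlog_b : 0 < Real.log b := Real.log_pos (by exact_mod_cast hb1)
  rintro ⟨q, hq⟩
  have hq0 : 0 < q := by
    have : (0 : ℝ) < q := hq ▸ div_pos hlog_a hlog_b
    exact_mod_cast this
  lift q to ℚ≥0 using hq0.le
  have hlog : Real.log ((a : ℝ) ^ q.den) = Real.log ((b : ℝ) ^ q.num) := by
    have hq' : (q.num : ℝ) / q.den = Real.log a / Real.log b := by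
      rw [← hq, ← NNRat.cast_def]
      norm_cast
    rw [div_eq_div_iff (by simp) hlog_b.ne'] at hq'
    rw [Real.log_pow, Real.log_pow, hq', mul_comm]
  have hpow : a ^ q.den = b ^ q.num := by
    have := Real.log_injOn_pos (Set.mem_Ioi.mpr (by positivity))
      (Set.mem_Ioi.mpr (by positivity)) hlog
    exact_mod_cast this
  have hnum : q.num ≠ 0 := by simpa using hq0.ne'
  exact hpa (hp.dvd_of_dvd_pow (hpow ▸ dvd_pow hpb hnum))

lemma exists_mem_submonoid_log_eq {S : Submonoid ℕ} {a b : ℕ} (ha : a ∈ S) (hb : b ∈ S)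
    (ha0 : a ≠ 0) (hb0 : b ≠ 0) {s : ℝ}
    (hs : s ∈ AddSubmonoid.closure {Real.log a, Real.log b}) :
    ∃ m ∈ S, m ≠ 0 ∧ Real.log m = s := by
  obtain ⟨k, l, rfl⟩ := (AddSubmonoid.mem_closure_pair _ _ _).mp hs
  refine ⟨a ^ k * b ^ l, S.mul_mem (S.pow_mem ha k) (S.pow_mem hb l), by positivity, ?_⟩
  push_cast
  rw [Real.log_mul (by positivity) (by positivity), Real.log_pow, Real.log_pow, nsmul_eq_mul,
    nsmul_eq_mul]

theorem eventually_exists_mem_submonoid_mul_lt {S : Submonoid ℕ} {a b : ℕ} (ha : a ∈ S)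
    (hb : b ∈ S) (hab : Irrational (Real.log a / Real.log b)) {c : ℝ} (hc : c < 1) :
    ∀ᶠ n : ℕ in atTop, ∃ m ∈ S, m ≤ n ∧ c * n < m := by
  have ha0 : a ≠ 0 := by rintro rfl; simp at hab
  have hb0 : b ≠ 0 := by rintro rfl; simp at hab
  have hlog_a : 0 < Real.log a :=
    (Real.log_natCast_nonneg a).lt_of_ne' fun h ↦ hab.ne_zero (by rw [h, zero_div])
  have hdense : Dense
      (AddSubgroup.closure (AddSubmonoid.closure {Real.log a, Real.log b} : Set ℝ) : Set ℝ) :=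
    (dense_addSubgroupClosure_pair_iff.mpr hab).mono
      (AddSubgroup.closure_mono AddSubmonoid.subset_closure)
  have hexp : c < Real.exp (-(1 - c)) := by
    linarith [Real.add_one_lt_exp (show -(1 - c) ≠ 0 by linarith)]
  have hlog_tendsto : Tendsto (fun n : ℕ ↦ Real.log n) atTop atTop :=
    Real.tendsto_log_atTop.comp tendsto_natCast_atTop_atTop
  have hgap := eventually_exists_mem_Ioc_of_dense_closure hdense
    (AddSubmonoid.subset_closure (Set.mem_insert _ _)) hlog_a (sub_pos.mpr hc)
  filter_upwards [eventually_gt_atTop 0, hlog_tendsto.eventually hgap] with n hn hgap_n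
  obtain ⟨s, hs, hlt, hle⟩ := hgap_n
  obtain ⟨m, hmS, hm0, rfl⟩ := exists_mem_submonoid_log_eq ha hb ha0 hb0 hs
  have hn_pos : (0 : ℝ) < n := by positivity
  have hm_pos : (0 : ℝ) < m := by positivity
  refine ⟨m, hmS, by exact_mod_cast (Real.log_le_log_iff hm_pos hn_pos).mp hle, ?_⟩
  calc c * n < Real.exp (-(1 - c)) * n := by gcongr
    _ = Real.exp (Real.log n - (1 - c)) := by
      rw [sub_eq_neg_add (Real.log n), Real.exp_add, Real.exp_log hn_pos]
    _ < m := (Real.lt_log_iff_exp_lt hm_pos).mp hlt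

end GapsInMonoids

theorem eventually_mul_sqrt_lt_rSchur {c : ℝ} (hc : c < 1) :
    ∀ᶠ n : ℕ in atTop, c * √n < rSchur n := by
  have hsq : max c 0 ^ 2 < 1 :=
    (sq_lt_one_iff₀ (le_max_right c 0)).mpr (max_lt hc zero_lt_one)
  have hirr : Irrational (Real.log (2 : ℕ) / Real.log (12 : ℕ)) :=
    irrational_log_div_log Nat.prime_three (by norm_num) (by norm_num) (by norm_num) (by norm_num)
  filter_upwards [eventually_exists_mem_submonoid_mul_lt two_mem_hadamardOrders
    twelve_mem_hadamardOrders hirr hsq] with n hn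
  obtain ⟨m, hm, hmn, hlt⟩ := hn
  calc c * √n ≤ max c 0 * √n := by gcongr; exact le_max_left c 0
    _ < √m := Real.lt_sqrt_of_sq_lt (by rwa [mul_pow, Real.sq_sqrt (Nat.cast_nonneg n)])
    _ ≤ rSchur m := sqrt_le_rSchur_of_mem_hadamardOrders hm
    _ ≤ rSchur n := rSchur_mono hmn

/-- `r n / √n → 1` as `n → ∞`. -/
theorem rSchur_div_sqrt_tendsto_one :
    Filter.Tendsto (fun n : ℕ => rSchur n / Real.sqrt n) Filter.atTop (nhds 1) := by
  refine tendsto_order.mpr ⟨fun c hc ↦ ?_, fun c hc ↦ ?_⟩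
  · filter_upwards [eventually_mul_sqrt_lt_rSchur hc, eventually_gt_atTop 0] with n hn hn0
    exact (lt_div_iff₀ (by positivity)).mpr hn
  · exact .of_forall fun n ↦ (div_le_one_of_le₀ (rSchur_le_sqrt n) (Real.sqrt_nonneg _)).trans_lt hc
end

section
/- r_6 = (4 + √10)/3. That is, the maximum of ‖M‖_S over all 6×6 real matrices M with entries of absolute value at most 1 equals (4 + √10)/3. -/
open scoped ComplexOrder

/-!
If `M = A * B` with rows of `A` and columns of `B` of squared norm at most `r`, the Schur norm of
`M` is at most `r`. The Schur norm is convex, so for the upper bound it suffices to factor the sign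
matrices. A matrix `X` factors as `X S⁻¹ * S`, where `S²` is built from the projection onto the
functions constant on the classes of a partition of the columns.

Split the columns by the product of their entries. Inner products of columns are congruent to
`2` mod `4` within a class and to `0` mod `4` across classes. If two columns have inner product at
least `4` in absolute value, or two triangles of columns with negative sign share an edge, then
after sign changes two columns differ only in rows where two others agree with the first; this
near-repetition is cheap to factor. Otherwise the columns can be negated so that the off-diagonal
entries of the Gram matrix `G` are `0` across classes and constantly `±2` within each class. The
identity `X G⁻¹ Xᵀ = 1` then forces the classes to be balanced or trivial and fixes the row norms
of `X S⁻¹`. The extreme case is two classes of size three with all entries `2`, as for the sign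
matrix of maximal determinant; there the orthogonal polar factor attains the bound.
-/

open Matrix
open scoped Finset Matrix.Norms.L2Operator

variable {m n κ : Type*}

/-- `M = A * B` where the rows of `A` have squared Euclidean norm at most `r` and the columns of
`B` have squared Euclidean norm at most `c`. By Haagerup's criterion, this bounds the Schur norm
of `M` by `√r * √c`. The inner index type is taken to be `Fin d` to avoid a universe parameter. -/
def HasSchurFactorization (r c : ℝ) (M : Matrix m n ℝ) : Prop :=
  ∃ (d : ℕ) (A : Matrix m (Fin d) ℝ) (B : Matrix (Fin d) n ℝ),
    M = A * B ∧ (∀ i, ∑ k, A i k ^ 2 ≤ r) ∧ ∀ j, ∑ k, B k j ^ 2 ≤ c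

/-- The vector `v` with its coordinates multiplied by the real numbers `a j`. -/
noncomputable def coordScale (a : n → ℝ) (v : EuclideanSpace ℂ n) : EuclideanSpace ℂ n :=
  WithLp.toLp 2 fun j => a j * v j

theorem sum_norm_sq_coordScale_le [Fintype n] [Fintype κ] {c : ℝ} {a : κ → n → ℝ}
    (ha : ∀ j, ∑ k, a k j ^ 2 ≤ c) (v : EuclideanSpace ℂ n) :
    ∑ k, ‖coordScale (a k) v‖ ^ 2 ≤ c * ‖v‖ ^ 2 := by
  simp only [coordScale, EuclideanSpace.norm_sq_eq, norm_mul, Complex.norm_real, mul_pow,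
    Real.norm_eq_abs, sq_abs]
  rw [Finset.sum_comm, Finset.mul_sum]
  refine Finset.sum_le_sum fun j _ => ?_
  rw [← Finset.sum_mul]
  gcongr
  exact ha j

theorem inner_mul_hadamard [Fintype m] [Fintype n] [DecidableEq n] [Fintype κ]
    (A : Matrix m κ ℝ) (B : Matrix κ n ℝ) (C : Matrix m n ℂ)
    (v : EuclideanSpace ℂ n) (u : EuclideanSpace ℂ m) :
    inner ℂ (toEuclideanLin ((A * B).map Complex.ofReal ⊙ C) v) u =
      ∑ k, inner ℂ (toEuclideanLin C (coordScale (B k) v)) (coordScale (Aᵀ k) u) := by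
  simp only [PiLp.inner_apply, coordScale, toLpLin_apply, mulVec, dotProduct, hadamard_apply,
    map_apply, mul_apply, transpose_apply, RCLike.inner_apply, map_mul, map_sum,
    Complex.conj_ofReal, Complex.ofReal_sum, Complex.ofReal_mul, Finset.sum_mul, Finset.mul_sum]
  conv_rhs => rw [Finset.sum_comm]
  refine Finset.sum_congr rfl fun i _ => ?_
  conv_rhs => rw [Finset.sum_comm]
  exact Finset.sum_congr rfl fun j _ => Finset.sum_congr rfl fun k _ => by ring

namespace HasSchurFactorization

variable {r c r₁ r₂ : ℝ} {M : Matrix m n ℝ}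

theorem of_mul [Fintype κ] {A : Matrix m κ ℝ} {B : Matrix κ n ℝ}
    (hA : ∀ i, ∑ k, A i k ^ 2 ≤ r) (hB : ∀ j, ∑ k, B k j ^ 2 ≤ c) :
    HasSchurFactorization r c (A * B) := by
  let e := Fintype.equivFin κ
  refine ⟨_, A.submatrix id e.symm, B.submatrix e.symm id, ?_, fun i => ?_, fun j => ?_⟩
  · rw [submatrix_mul_equiv, submatrix_id_id]
  · exact (e.symm.sum_comp fun k => A i k ^ 2).trans_le (hA i)
  · exact (e.symm.sum_comp fun k => B k j ^ 2).trans_le (hB j)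

theorem of_weights [Fintype κ] {A : Matrix m κ ℝ} {D : κ → ℝ} {B : Matrix κ n ℝ}
    (hD : ∀ k, 0 < D k) (hA : ∀ i, ∑ k, A i k ^ 2 / D k ≤ r)
    (hB : ∀ j, ∑ k, D k * B k j ^ 2 ≤ c) : HasSchurFactorization r c (A * B) := by
  have hAB : A * B = of (fun i k => A i k / √(D k)) * of (fun k j => √(D k) * B k j) := by
    ext i j
    refine Finset.sum_congr rfl fun k _ => ?_
    have := (Real.sqrt_pos.2 (hD k)).ne'
    simp only [of_apply]
    field_simp
  rw [hAB]
  apply of_mul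
  · simpa [div_pow, Real.sq_sqrt (hD _).le] using hA
  · simpa [mul_pow, Real.sq_sqrt (hD _).le] using hB

theorem mono {r' c' : ℝ} (h : HasSchurFactorization r c M) (hr : r ≤ r') (hc : c ≤ c') :
    HasSchurFactorization r' c' M := by
  obtain ⟨d, A, B, hM, hA, hB⟩ := h
  exact ⟨d, A, B, hM, fun i => (hA i).trans hr, fun j => (hB j).trans hc⟩

theorem submatrix {m' n' : Type*} (h : HasSchurFactorization r c M) (f : m' → m) (g : n' → n) :
    HasSchurFactorization r c (M.submatrix f g) := by
  obtain ⟨d, A, B, rfl, hA, hB⟩ := h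
  exact ⟨d, A.submatrix f id, B.submatrix id g, rfl, fun i => hA (f i), fun j => hB (g j)⟩

theorem mul_diagonal [Fintype n] [DecidableEq n] (h : HasSchurFactorization r c M) {s : n → ℝ}
    (hs : ∀ j, s j ^ 2 ≤ 1) : HasSchurFactorization r c (M * diagonal s) := by
  obtain ⟨d, A, B, rfl, hA, hB⟩ := h
  rw [Matrix.mul_assoc]
  refine of_mul hA fun j => (Finset.sum_le_sum fun k _ => ?_).trans (hB j)
  rw [Matrix.mul_diagonal, mul_pow]
  exact mul_le_of_le_one_right (sq_nonneg _) (hs j)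

theorem fromCols {n₁ n₂ : Type*} {M₁ : Matrix m n₁ ℝ} {M₂ : Matrix m n₂ ℝ}
    (h₁ : HasSchurFactorization r₁ c M₁) (h₂ : HasSchurFactorization r₂ c M₂) :
    HasSchurFactorization (r₁ + r₂) c (fromCols M₁ M₂) := by
  obtain ⟨d₁, A₁, B₁, rfl, hA₁, hB₁⟩ := h₁
  obtain ⟨d₂, A₂, B₂, rfl, hA₂, hB₂⟩ := h₂
  have hAB : Matrix.fromCols (A₁ * B₁) (A₂ * B₂) =
      Matrix.fromCols A₁ A₂ * fromBlocks B₁ 0 0 B₂ := by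
    simp [fromCols_mul_fromBlocks]
  rw [hAB]
  apply of_mul
  · simpa using fun i => add_le_add (hA₁ i) (hA₂ i)
  · rintro (j | j)
    · simpa using hB₁ j
    · simpa using hB₂ j

theorem of_sq_le_one [Fintype n] (hM : ∀ i j, M i j ^ 2 ≤ 1) (hc : 0 < c) :
    HasSchurFactorization (Fintype.card n / c) c M := by
  classical
  rw [← Matrix.mul_one M]
  refine of_weights (D := fun _ => c) (fun _ => hc) (fun i => ?_) fun j => ?_
  · rw [← Finset.sum_div]
    gcongr
    simpa using Finset.sum_le_sum fun j (_ : j ∈ Finset.univ) => hM i j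
  · simp [one_apply]

/-- **Haagerup's criterion**, in the easy direction. -/
theorem norm_hadamard_le [Fintype m] [Fintype n] [DecidableEq n]
    (h : HasSchurFactorization r c M) (C : Matrix m n ℂ) :
    ‖M.map Complex.ofReal ⊙ C‖ ≤ √r * √c * ‖C‖ := by
  obtain ⟨d, A, B, rfl, hA, hB⟩ := h
  rw [l2_opNorm_def]
  refine ContinuousLinearMap.opNorm_le_of_re_inner_le (by positivity) fun v u hv hu => ?_
  have hleft : ∑ k, ‖coordScale (Aᵀ k) u‖ ^ 2 ≤ r := by
    simpa [hu] using sum_norm_sq_coordScale_le (a := Aᵀ) hA u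
  have hright : ∑ k, ‖coordScale (B k) v‖ ^ 2 ≤ c := by
    simpa [hv] using sum_norm_sq_coordScale_le hB v
  calc RCLike.re (inner ℂ (toEuclideanLin ((A * B).map Complex.ofReal ⊙ C) v) u)
      = ∑ k, RCLike.re (inner ℂ (toEuclideanLin C (coordScale (B k) v)) (coordScale (Aᵀ k) u)) := by
        simp only [inner_mul_hadamard, map_sum]
    _ ≤ ∑ k, ‖coordScale (Aᵀ k) u‖ * ‖coordScale (B k) v‖ * ‖C‖ := by
        refine Finset.sum_le_sum fun k _ => (re_inner_le_norm (𝕜 := ℂ) _ _).trans ?_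
        rw [mul_assoc, mul_comm, mul_comm ‖coordScale (B k) v‖]
        exact mul_le_mul_of_nonneg_left (l2_opNorm_mulVec C _) (norm_nonneg _)
    _ ≤ √(∑ k, ‖coordScale (Aᵀ k) u‖ ^ 2) * √(∑ k, ‖coordScale (B k) v‖ ^ 2) * ‖C‖ := by
        rw [← Finset.sum_mul]
        exact mul_le_mul_of_nonneg_right (Real.sum_mul_le_sqrt_mul_sqrt _ _ _) (norm_nonneg _)
    _ ≤ √r * √c * ‖C‖ :=
        mul_le_mul_of_nonneg_right (mul_le_mul (Real.sqrt_le_sqrt hleft)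
          (Real.sqrt_le_sqrt hright) (Real.sqrt_nonneg _) (Real.sqrt_nonneg _)) (norm_nonneg _)

end HasSchurFactorization

section BlockMatrix

variable [Fintype n] [DecidableEq κ]

/-- The orthogonal projection of `ℝⁿ` onto the vectors that are constant on the fibers of `b`. -/
noncomputable def fiberMean (b : n → κ) : Matrix n n ℝ :=
  of fun i j => if b i = b j then (#{k | b k = b j} : ℝ)⁻¹ else 0

theorem transpose_fiberMean (b : n → κ) : (fiberMean b)ᵀ = fiberMean b := by
  ext i j
  by_cases h : b i = b j
  · simp [fiberMean, h]
  · simp [fiberMean, h, Ne.symm h]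

theorem fiberMean_mulVec (b : n → κ) (x : n → ℝ) (i : n) :
    (fiberMean b *ᵥ x) i = (∑ j with b j = b i, x j) / #{j | b j = b i} := by
  rw [Finset.sum_filter, Finset.sum_div]
  refine Finset.sum_congr rfl fun j _ => ?_
  by_cases h : b i = b j
  · simp [fiberMean, h, div_eq_inv_mul]
  · simp [fiberMean, h, Ne.symm h]

theorem fiberMean_mul_self (b : n → κ) : fiberMean b * fiberMean b = fiberMean b := by
  ext i j
  have hcard : (#{k | b k = b i} : ℝ) ≠ 0 :=
    Nat.cast_ne_zero.2 (Finset.card_ne_zero_of_mem (a := i) (by simp))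
  calc (fiberMean b * fiberMean b) i j
      = (∑ k with b k = b i, fiberMean b i j) / #{k | b k = b i} := by
        refine (fiberMean_mulVec b (fun k => fiberMean b k j) i).trans ?_
        congr 1
        refine Finset.sum_congr rfl fun k hk => ?_
        simp only [fiberMean, of_apply, (Finset.mem_filter.1 hk).2]
    _ = fiberMean b i j := by
        rw [Finset.sum_const, nsmul_eq_mul, mul_div_cancel_left₀ _ hcard]

variable [DecidableEq n]

theorem commute_diagonal_fiberMean (b : n → κ) (u : κ → ℝ) :
    Commute (diagonal (u ∘ b)) (fiberMean b) := by
  ext i j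
  by_cases h : b i = b j <;> simp [fiberMean, h, mul_comm]

/-- The matrix acting on functions supported on the fiber of `b` over `c` as `v c` on constants and
as `u c` on functions with vanishing sum. -/
noncomputable def blockMatrix (b : n → κ) (u v : κ → ℝ) : Matrix n n ℝ :=
  diagonal (u ∘ b) * (1 - fiberMean b) + diagonal (v ∘ b) * fiberMean b

theorem blockMatrix_apply (b : n → κ) (u v : κ → ℝ) (i j : n) :
    blockMatrix b u v i j = (if i = j then u (b j) else 0) +
      if b i = b j then (v (b j) - u (b j)) / #{k | b k = b j} else 0 := by
  rcases eq_or_ne i j with rfl | hij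
  · simp [blockMatrix, fiberMean]
    ring
  by_cases h : b i = b j
  · simp [blockMatrix, fiberMean, h, hij]
    ring
  · simp [blockMatrix, fiberMean, h, hij]

theorem transpose_blockMatrix (b : n → κ) (u v : κ → ℝ) :
    (blockMatrix b u v)ᵀ = blockMatrix b u v := by
  simp only [blockMatrix, Matrix.mul_sub, Matrix.mul_one, transpose_add, transpose_sub,
    transpose_mul, diagonal_transpose, transpose_fiberMean, (commute_diagonal_fiberMean b _).eq]

theorem blockMatrix_one (b : n → κ) : blockMatrix b 1 1 = 1 := by
  simp [blockMatrix]

theorem blockMatrix_mul (b : n → κ) (u v u' v' : κ → ℝ) :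
    blockMatrix b u v * blockMatrix b u' v' = blockMatrix b (u * u') (v * v') := by
  have hP : IsIdempotentElem (fiberMean b) := fiberMean_mul_self b
  have hcomm (w : κ → ℝ) : Commute (1 - fiberMean b) (diagonal (w ∘ b)) :=
    ((Commute.one_right _).sub_right (commute_diagonal_fiberMean b w)).symm
  have hdiag (w w' : κ → ℝ) : diagonal (w ∘ b) * diagonal (w' ∘ b) = diagonal ((w * w') ∘ b) := by
    rw [diagonal_mul_diagonal]; rfl
  simp only [blockMatrix, Matrix.mul_add, Matrix.add_mul, (hcomm _).mul_mul_mul_comm,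
    (commute_diagonal_fiberMean b _).symm.mul_mul_mul_comm, hP.eq, hP.one_sub.eq,
    hP.mul_one_sub_self, hP.one_sub_mul_self, hdiag, Matrix.mul_zero, add_zero, zero_add]

theorem dotProduct_blockMatrix_mulVec [Fintype κ] (b : n → κ) (u v : κ → ℝ) (x : n → ℝ) :
    x ⬝ᵥ blockMatrix b u v *ᵥ x = ∑ c,
      (u c * (∑ j with b j = c, x j ^ 2 - (∑ j with b j = c, x j) ^ 2 / #{j | b j = c}) +
        v c * ((∑ j with b j = c, x j) ^ 2 / #{j | b j = c})) := by
  rw [dotProduct, ← Finset.sum_fiberwise _ b]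
  refine Finset.sum_congr rfl fun c _ => ?_
  calc ∑ j with b j = c, x j * (blockMatrix b u v *ᵥ x) j
      = ∑ j with b j = c, (u c * x j ^ 2 +
          x j * ((v c - u c) * ((∑ j with b j = c, x j) / #{j | b j = c}))) := by
        refine Finset.sum_congr rfl fun j hj => ?_
        obtain rfl : b j = c := by simpa using hj
        simp only [blockMatrix, add_mulVec, ← mulVec_mulVec, sub_mulVec, one_mulVec,
          mulVec_diagonal, Pi.add_apply, Pi.sub_apply, fiberMean_mulVec, Function.comp_apply]
        ring
    _ = _ := by
        rw [Finset.sum_add_distrib, ← Finset.mul_sum, ← Finset.sum_mul]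
        ring

theorem HasSchurFactorization.of_blockMatrix {r c : ℝ} (X : Matrix m n ℝ) (b : n → κ)
    {α γ : κ → ℝ} (hα : ∀ c, 0 < α c) (hγ : ∀ c, 0 < γ c)
    (hrow : ∀ i, X i ⬝ᵥ blockMatrix b α⁻¹ γ⁻¹ *ᵥ X i ≤ r)
    (hcol : ∀ j, blockMatrix b α γ j j ≤ c) : HasSchurFactorization r c X := by
  let sqrtα : κ → ℝ := fun c => √(α c)
  let sqrtγ : κ → ℝ := fun c => √(γ c)
  have hsqrtα : sqrtα * sqrtα = α := funext fun c => Real.mul_self_sqrt (hα c).le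
  have hsqrtγ : sqrtγ * sqrtγ = γ := funext fun c => Real.mul_self_sqrt (hγ c).le
  let S := blockMatrix b sqrtα sqrtγ
  let T := blockMatrix b sqrtα⁻¹ sqrtγ⁻¹
  have hTS : T * S = 1 := by
    rw [blockMatrix_mul, ← blockMatrix_one b]
    congr 1
    · exact funext fun c => inv_mul_cancel₀ (Real.sqrt_pos.2 (hα c)).ne'
    · exact funext fun c => inv_mul_cancel₀ (Real.sqrt_pos.2 (hγ c)).ne'
  have hTT : T * T = blockMatrix b α⁻¹ γ⁻¹ := by
    rw [blockMatrix_mul, ← mul_inv, ← mul_inv, hsqrtα, hsqrtγ]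
  have hSS : S * S = blockMatrix b α γ := by rw [blockMatrix_mul, hsqrtα, hsqrtγ]
  rw [← Matrix.mul_one X, ← hTS, ← Matrix.mul_assoc]
  refine of_mul (fun i => ?_) fun j => ?_
  · calc ∑ k, (X * T) i k ^ 2 = (X i ᵥ* T) ⬝ᵥ (X i ᵥ* T) := by
          simp only [dotProduct, sq]; rfl
      _ = X i ⬝ᵥ blockMatrix b α⁻¹ γ⁻¹ *ᵥ X i := by
          rw [← hTT, ← mulVec_mulVec, ← dotProduct_mulVec, ← mulVec_transpose,
            transpose_blockMatrix]
      _ ≤ r := hrow i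
  · calc ∑ k, S k j ^ 2 = (Sᵀ * S) j j := by simp only [mul_apply, transpose_apply, sq]
      _ = blockMatrix b α γ j j := by rw [transpose_blockMatrix, hSS]
      _ ≤ c := hcol j

theorem dotProduct_blockMatrix_inv_mulVec_of_gram {X : Matrix n n ℝ} {b : n → κ} {u v : κ → ℝ}
    (hX : Xᵀ * X = blockMatrix b u v) (hu : ∀ c, u c ≠ 0) (hv : ∀ c, v c ≠ 0) (i : n) :
    X i ⬝ᵥ blockMatrix b u⁻¹ v⁻¹ *ᵥ X i = 1 := by
  have hinv : blockMatrix b u⁻¹ v⁻¹ * Xᵀ * X = 1 := by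
    rw [Matrix.mul_assoc, hX, blockMatrix_mul, ← blockMatrix_one b]
    congr 1
    · exact funext fun c => inv_mul_cancel₀ (hu c)
    · exact funext fun c => inv_mul_cancel₀ (hv c)
  rw [← transpose_transpose X, ← mul_mul_apply, transpose_transpose, Matrix.mul_assoc,
    mul_eq_one_comm.1 hinv, one_apply_eq]

end BlockMatrix

section SignMatrix

/-- The real `±1` matrix with the given signs as entries. -/
def signMatrix (Z : Matrix m n ℤˣ) : Matrix m n ℝ :=
  Z.map fun s => ((s : ℤ) : ℝ)

theorem signMatrix_sq (Z : Matrix m n ℤˣ) (i : m) (j : n) : signMatrix Z i j ^ 2 = 1 := by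
  rcases Int.units_eq_one_or (Z i j) with h | h <;> simp [signMatrix, h]

variable [Fintype n] [DecidableEq κ]

/-- The sum of the signs `z j` over the fiber of `b` over `c`. -/
def fiberSum (b : n → κ) (z : n → ℤˣ) (c : κ) : ℤ :=
  ∑ j with b j = c, (z j : ℤ)

theorem abs_fiberSum_le (b : n → κ) (z : n → ℤˣ) (c : κ) :
    |fiberSum b z c| ≤ #{j | b j = c} := by
  refine (Finset.abs_sum_le_sum_abs _ _).trans_eq ?_
  simp [Int.abs_eq_natAbs]

theorem sum_card_fiber [Fintype κ] (b : n → κ) : ∑ c, #{j | b j = c} = Fintype.card n :=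
  (Finset.card_eq_sum_card_fiberwise fun _ _ => Finset.mem_univ _).symm

variable [DecidableEq n] [Fintype κ]

theorem signMatrix_dotProduct_blockMatrix_mulVec (Z : Matrix m n ℤˣ) (b : n → κ) (u v : κ → ℝ)
    (i : m) :
    signMatrix Z i ⬝ᵥ blockMatrix b u v *ᵥ signMatrix Z i = ∑ c,
      (u c * (#{j | b j = c} - fiberSum b (Z i) c ^ 2 / #{j | b j = c}) +
        v c * (fiberSum b (Z i) c ^ 2 / #{j | b j = c})) := by
  have hsum (c : κ) : (fiberSum b (Z i) c : ℝ) = ∑ j with b j = c, signMatrix Z i j := by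
    simp [fiberSum, signMatrix]
  simp [dotProduct_blockMatrix_mulVec, signMatrix_sq, hsum]

end SignMatrix

section GramCases

variable {Z : Matrix (Fin 6) (Fin 6) ℤˣ} {b : Fin 6 → ℤˣ}

theorem sum_intUnits {M : Type*} [AddCommMonoid M] (f : ℤˣ → M) : ∑ c, f c = f 1 + f (-1) := by
  rw [UnitsInt.univ, Finset.sum_pair (by decide)]

theorem two_sq_ne_five_sq_add_five {p : ℤ} (q : ℤ) (hp : |p| ≤ 3) : 2 * p ^ 2 ≠ 5 * q ^ 2 + 5 := by
  have := sq_nonneg q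
  obtain ⟨_, _⟩ := abs_le.1 hp
  interval_cases p <;> omega

theorem eq_zero_or_three_or_six_of_leverage {k : ℕ} {p q : ℤ} (hk : k ≤ 6) (hp : |p| ≤ k)
    (hq : |q| ≤ 6 - k) (h : (8 - k) * p ^ 2 + (k + 2) * q ^ 2 = 2 * ((k + 2) * (8 - k))) :
    k = 0 ∨ k = 3 ∨ k = 6 := by
  obtain ⟨_, _⟩ := abs_le.1 hp
  obtain ⟨_, _⟩ := abs_le.1 hq
  interval_cases k <;> norm_num at * <;> interval_cases p <;>
    first | omega | (interval_cases q <;> omega)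

theorem thirtyOne_div_thirteen_le : (31 / 13 : ℝ) ≤ (4 + √10) / 3 := by
  have : (316 / 100 : ℝ) ≤ √10 := Real.le_sqrt_of_sq_le (by norm_num)
  linarith

theorem HasSchurFactorization.of_balanced {t α γ : ℝ} (hα : 0 < α) (hγ : 0 < γ)
    (hb : ∀ c, #{j | b j = c} = 3)
    (ht : ∀ i, (fiberSum b (Z i) 1 : ℝ) ^ 2 + (fiberSum b (Z i) (-1) : ℝ) ^ 2 = t) :
    HasSchurFactorization ((6 - t / 3) / α + t / 3 / γ) ((2 * α + γ) / 3) (signMatrix Z) := by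
  refine of_blockMatrix _ b (α := fun _ => α) (γ := fun _ => γ) (fun _ => hα) (fun _ => hγ)
    (fun i => le_of_eq ?_) fun j => le_of_eq ?_
  · simp only [signMatrix_dotProduct_blockMatrix_mulVec, sum_intUnits, hb, Pi.inv_apply, ← ht i]
    field_simp
    ring
  · simp only [blockMatrix_apply, hb]
    norm_num
    ring

theorem HasSchurFactorization.of_balanced_gram (ε : ℤˣ → ℤˣ)
    (hb : ∀ c, #{j | b j = c} = 3)
    (hgram : (signMatrix Z)ᵀ * signMatrix Z =
      blockMatrix b (fun c => 6 - 2 * ((ε c : ℤ) : ℝ)) fun c => 6 + 4 * ((ε c : ℤ) : ℝ)) :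
    HasSchurFactorization ((4 + √10) / 3) ((4 + √10) / 3) (signMatrix Z) := by
  have hlev (i : Fin 6) := dotProduct_blockMatrix_inv_mulVec_of_gram hgram
    (fun c => by rcases Int.units_eq_one_or (ε c) with h | h <;> norm_num [h])
    (fun c => by rcases Int.units_eq_one_or (ε c) with h | h <;> norm_num [h]) i
  have hs (i : Fin 6) (c : ℤˣ) : |fiberSum b (Z i) c| ≤ 3 := by
    simpa [hb] using abs_fiberSum_le b (Z i) c
  simp only [signMatrix_dotProduct_blockMatrix_mulVec, hb, sum_intUnits, Pi.inv_apply] at hlev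
  rcases Int.units_eq_one_or (ε 1) with h₁ | h₁ <;>
    rcases Int.units_eq_one_or (ε (-1)) with h₂ | h₂ <;>
    norm_num [h₁, h₂] at hlev
  · have hsum (i : Fin 6) :
        (fiberSum b (Z i) 1 : ℝ) ^ 2 + (fiberSum b (Z i) (-1) : ℝ) ^ 2 = 10 := by
      linarith [hlev i]
    -- By Cauchy–Schwarz the product of the two bounds is least at `α : γ = 2 : √10`.
    refine (of_balanced two_pos (γ := √10) (by positivity) hb hsum).mono (le_of_eq ?_)
      (le_of_eq ?_)
    · rw [div_right_comm, Real.div_sqrt]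
      ring
    · ring
  · refine absurd ?_ (two_sq_ne_five_sq_add_five (fiberSum b (Z 0) (-1)) (hs 0 1))
    have : 2 * (fiberSum b (Z 0) 1 : ℝ) ^ 2 = 5 * (fiberSum b (Z 0) (-1)) ^ 2 + 5 := by
      linarith [hlev 0]
    exact_mod_cast this
  · refine absurd ?_ (two_sq_ne_five_sq_add_five (fiberSum b (Z 0) 1) (hs 0 (-1)))
    have : 2 * (fiberSum b (Z 0) (-1) : ℝ) ^ 2 = 5 * (fiberSum b (Z 0) 1) ^ 2 + 5 := by
      linarith [hlev 0]
    exact_mod_cast this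
  · have hsum (i : Fin 6) :
        (fiberSum b (Z i) 1 : ℝ) ^ 2 + (fiberSum b (Z i) (-1) : ℝ) ^ 2 = 2 := by
      linarith [hlev i]
    exact (of_balanced (α := 14 / 5) (γ := 7 / 5) (by norm_num) (by norm_num) hb hsum).mono
      (by linarith [thirtyOne_div_thirteen_le]) (by linarith [thirtyOne_div_thirteen_le])

theorem sum_fiberSum_sq_div_of_gram [Fintype κ] [DecidableEq κ] {b : Fin 6 → κ}
    (hgram : (signMatrix Z)ᵀ * signMatrix Z =
      blockMatrix b (fun _ => 4) fun c => 4 + 2 * #{j | b j = c}) (i : Fin 6) :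
    ∑ c, (fiberSum b (Z i) c : ℝ) ^ 2 / (#{j | b j = c} + 2) = 2 := by
  have hlev := dotProduct_blockMatrix_inv_mulVec_of_gram hgram (fun _ => by norm_num)
    (fun _ => by positivity) i
  have hcard : ∑ c, (#{j | b j = c} : ℝ) = 6 := by exact_mod_cast sum_card_fiber b
  have hterm (c : κ) :
      4⁻¹ * (#{j | b j = c} - (fiberSum b (Z i) c : ℝ) ^ 2 / #{j | b j = c}) +
        (4 + 2 * #{j | b j = c} : ℝ)⁻¹ * ((fiberSum b (Z i) c : ℝ) ^ 2 / #{j | b j = c}) =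
      (#{j | b j = c} - (fiberSum b (Z i) c : ℝ) ^ 2 / (#{j | b j = c} + 2)) / 4 := by
    rcases Nat.eq_zero_or_pos #{j | b j = c} with h0 | hpos
    · have : fiberSum b (Z i) c = 0 := by simpa [h0] using abs_fiberSum_le b (Z i) c
      simp [h0, this]
    · have : (0 : ℝ) < #{j | b j = c} := by exact_mod_cast hpos
      field_simp
      ring
  simp only [signMatrix_dotProduct_blockMatrix_mulVec, Pi.inv_apply, hterm, ← Finset.sum_div,
    Finset.sum_sub_distrib, hcard] at hlev
  linarith

theorem HasSchurFactorization.of_constant_gram [Finite κ] [DecidableEq κ] {b : Fin 6 → κ}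
    {c₀ : κ} (hb : ∀ j, b j = c₀)
    (hgram : (signMatrix Z)ᵀ * signMatrix Z =
      blockMatrix b (fun _ => 4) fun c => 4 + 2 * #{j | b j = c}) :
    HasSchurFactorization (7 / 3) (7 / 3) (signMatrix Z) := by
  have := Fintype.ofFinite κ
  have hcard : #{j | b j = c₀} = 6 := by simp [hb]
  have hzero (i : Fin 6) (c : κ) (hc : c ≠ c₀) : fiberSum b (Z i) c = 0 := by
    simp [fiberSum, hb, hc.symm]
  refine of_blockMatrix _ b (α := fun _ => 2) (γ := fun _ => 4) (fun _ => two_pos)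
    (fun _ => four_pos) (fun i => le_of_eq ?_) fun j => le_of_eq ?_
  · have hlev := sum_fiberSum_sq_div_of_gram hgram i
    rw [Fintype.sum_eq_single c₀ fun c hc => by simp [hzero i c hc], hcard] at hlev
    rw [signMatrix_dotProduct_blockMatrix_mulVec,
      Fintype.sum_eq_single c₀ fun c hc => by simp [hzero i c hc, hb, hc.symm], hcard]
    norm_num
    linarith
  · rw [blockMatrix_apply, hb j, hcard]
    norm_num

theorem card_fiber_one_of_gram
    (hgram : (signMatrix Z)ᵀ * signMatrix Z =
      blockMatrix b (fun _ => 4) fun c => 4 + 2 * #{j | b j = c}) :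
    #{j | b j = 1} = 0 ∨ #{j | b j = 1} = 3 ∨ #{j | b j = 1} = 6 := by
  have hcard : #{j | b j = 1} + #{j | b j = -1} = 6 := by
    simpa [sum_intUnits] using sum_card_fiber b
  have hcard' : (#{j | b j = -1} : ℝ) = 6 - #{j | b j = 1} := by
    rw [eq_sub_iff_add_eq']
    exact_mod_cast hcard
  have hp := abs_fiberSum_le b (Z 0) 1
  have hq := abs_fiberSum_le b (Z 0) (-1)
  refine eq_zero_or_three_or_six_of_leverage (by lia) hp (q := fiberSum b (Z 0) (-1)) (by lia) ?_
  have hlev := sum_fiberSum_sq_div_of_gram hgram 0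
  have hpos : (0 : ℝ) < 6 - #{j | b j = 1} + 2 := by
    rw [← hcard']
    positivity
  rw [sum_intUnits, hcard', div_add_div _ _ (by positivity) hpos.ne',
    div_eq_iff (by positivity)] at hlev
  have : (8 - #{j | b j = 1} : ℝ) * fiberSum b (Z 0) 1 ^ 2 +
      (#{j | b j = 1} + 2) * fiberSum b (Z 0) (-1) ^ 2 =
      2 * ((#{j | b j = 1} + 2) * (8 - #{j | b j = 1})) := by linarith
  exact_mod_cast this

theorem HasSchurFactorization.of_gram (ε : ℤˣ → ℤˣ)
    (hε : ∀ c, ε c = 1 ∨ ε c = -1 ∧ #{j | b j = c} = 3)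
    (hgram : (signMatrix Z)ᵀ * signMatrix Z =
      blockMatrix b (fun c => 6 - 2 * ((ε c : ℤ) : ℝ))
        fun c => 6 - 2 * ((ε c : ℤ) : ℝ) + 2 * ((ε c : ℤ) : ℝ) * #{j | b j = c}) :
    HasSchurFactorization ((4 + √10) / 3) ((4 + √10) / 3) (signMatrix Z) := by
  have hcard : #{j | b j = 1} + #{j | b j = -1} = 6 := by
    simpa [sum_intUnits] using sum_card_fiber b
  by_cases hb : ∀ c, #{j | b j = c} = 3
  · refine of_balanced_gram ε hb (hgram.trans ?_)
    congr 1
    ext c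
    rw [hb]
    ring
  have hb1 : #{j | b j = 1} ≠ 3 := fun h => hb fun c => by
    rcases Int.units_eq_one_or c with rfl | rfl <;> lia
  have hone (c : ℤˣ) : ε c = 1 := (hε c).resolve_right fun h => hb1 <| by
    rcases Int.units_eq_one_or c with rfl | rfl <;> lia
  have hgram' : (signMatrix Z)ᵀ * signMatrix Z =
      blockMatrix b (fun _ => 4) fun c => 4 + 2 * #{j | b j = c} := by
    rw [hgram]
    congr 1 <;> ext c <;> norm_num [hone]
  have hempty (c : ℤˣ) (h : #{j | b j = c} = 0) (j : Fin 6) : b j ≠ c :=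
    Finset.filter_eq_empty_iff.1 (Finset.card_eq_zero.1 h) (Finset.mem_univ j)
  have hconst : ∃ c₀, ∀ j, b j = c₀ := by
    rcases card_fiber_one_of_gram hgram' with h | h | h
    · exact ⟨-1, fun j => (Int.units_eq_one_or _).resolve_left (hempty 1 h j)⟩
    · exact absurd h hb1
    · exact ⟨1, fun j => (Int.units_eq_one_or _).resolve_right (hempty (-1) (by lia) j)⟩
  obtain ⟨c₀, hc₀⟩ := hconst
  exact (of_constant_gram hc₀ hgram').mono
    (by linarith [thirtyOne_div_thirteen_le]) (by linarith [thirtyOne_div_thirteen_le])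

end GramCases

section AgreeingColumns

theorem HasSchurFactorization.of_submatrix_embedding {p : Type*} [Fintype n] [Fintype p]
    {r c : ℝ} {M : Matrix m n ℝ} (f : p ↪ n) (h : HasSchurFactorization r c (M.submatrix id f))
    (hM : ∀ i j, M i j ^ 2 ≤ 1) (hc : 0 < c) :
    HasSchurFactorization (r + (Fintype.card n - Fintype.card p) / c) c M := by
  classical
  let e : p ⊕ ↥(Set.range f)ᶜ ≃ n :=
    ((Equiv.ofInjective f f.injective).sumCongr (Equiv.refl _)).trans (Equiv.Set.sumCompl _)
  let rest : Matrix m ↥(Set.range f)ᶜ ℝ := M.submatrix id Subtype.val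
  have hrest : HasSchurFactorization ((Fintype.card n - Fintype.card p) / c) c rest := by
    have hcard : (Fintype.card ↥(Set.range f)ᶜ : ℝ) = Fintype.card n - Fintype.card p := by
      rw [eq_sub_iff_add_eq', ← Nat.cast_add, ← Fintype.card_sum, Fintype.card_congr e]
    rw [← hcard]
    exact of_sq_le_one (fun i j => hM i j) hc
  have hM' : M = (Matrix.fromCols (M.submatrix id f) rest).submatrix id e.symm := by
    have hMe : M.submatrix id e = Matrix.fromCols (M.submatrix id f) rest := by
      ext i (j | j) <;> simp [e, rest]
    rw [← hMe, submatrix_submatrix, e.self_comp_symm, Function.comp_id, submatrix_id_id]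
  rw [hM']
  exact (h.fromCols hrest).submatrix id e.symm

-- The row bound leaves room for two arbitrary further columns, costing `2 / (31 / 13) = 26 / 31`.
theorem HasSchurFactorization.of_agreeing {M : Matrix m (Fin 4) ℝ} (hM : ∀ i j, M i j ^ 2 = 1)
    (h : ∀ i, M i 0 = M i 1 ∨ M i 2 = M i 0 ∧ M i 3 = M i 0) :
    HasSchurFactorization (31 / 13 - 26 / 31) (31 / 13) M := by
  -- When `M i 0 = -M i 1`, the last two entries are aligned with the first, so subtracting a
  -- multiple of their sum shortens the second coordinate. The multiple and the weights below are
  -- chosen to nearly balance all the row and column bounds.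
  let Y : Matrix m (Fin 4) ℝ := of fun i => ![(M i 0 + M i 1) / 2,
    (M i 0 - M i 1) / 2 - (M i 2 + M i 3) / 7, (M i 2 + M i 3) / 2, (M i 2 - M i 3) / 2]
  let L : Matrix (Fin 4) (Fin 4) ℝ :=
    !![1, 1, 0, 0; 1, -1, 0, 0; 2 / 7, -2 / 7, 1, 1; 0, 0, 1, -1]
  have hYL : M = Y * L := by
    ext i j
    fin_cases j <;> simp [Y, L, mul_apply, Fin.sum_univ_four] <;> ring
  rw [hYL]
  refine of_weights (D := ![8 / 5, 2 / 3, 9 / 7, 12 / 11]) (fun k => ?_) (fun i => ?_) fun j => ?_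
  · fin_cases k <;> norm_num
  · rw [Fin.sum_univ_four]
    change ((M i 0 + M i 1) / 2) ^ 2 / (8 / 5) +
      ((M i 0 - M i 1) / 2 - (M i 2 + M i 3) / 7) ^ 2 / (2 / 3) +
      ((M i 2 + M i 3) / 2) ^ 2 / (9 / 7) + ((M i 2 - M i 3) / 2) ^ 2 / (12 / 11) ≤ _
    rcases h i with h01 | ⟨h20, h30⟩
    · rcases sq_eq_sq_iff_eq_or_eq_neg.1 ((hM i 2).trans (hM i 3).symm) with h23 | h23
      · rw [← h01, h23]
        linarith [hM i 0, hM i 3]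
      · rw [← h01, h23]
        linarith [hM i 0, hM i 3]
    · rcases sq_eq_sq_iff_eq_or_eq_neg.1 ((hM i 1).trans (hM i 0).symm) with h10 | h10
      · rw [h10, h20, h30]
        linarith [hM i 0]
      · rw [h10, h20, h30]
        linarith [hM i 0]
  · fin_cases j <;> simp [L, Fin.sum_univ_four] <;> norm_num

theorem HasSchurFactorization.of_agreeing_columns [Fintype n] (hn : Fintype.card n = 6)
    {Z : Matrix m n ℤˣ} {a b c d : n} (habcd : [a, b, c, d].Nodup) (β : ℤˣ)
    (hc : ∃ γ : ℤˣ, ∀ i, Z i a = β * Z i b ∨ Z i c = γ * Z i a)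
    (hd : ∃ δ : ℤˣ, ∀ i, Z i a = β * Z i b ∨ Z i d = δ * Z i a) :
    HasSchurFactorization (31 / 13) (31 / 13) (signMatrix Z) := by
  obtain ⟨γ, hγ⟩ := hc
  obtain ⟨δ, hδ⟩ := hd
  let f : Fin 4 ↪ n := ⟨[a, b, c, d].get, habcd.injective_get⟩
  let σ : Fin 4 → ℤˣ := ![1, β, γ, δ]
  let W : Matrix m (Fin 4) ℤˣ := of fun i k => Z i (f k) * σ k
  have hW : HasSchurFactorization (31 / 13 - 26 / 31) (31 / 13) (signMatrix W) := by
    refine of_agreeing (signMatrix_sq W) fun i => ?_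
    rcases or_and_left.2 ⟨hγ i, hδ i⟩ with hab | ⟨hca, hda⟩
    · left
      simp [signMatrix, W, f, σ, hab, mul_comm]
    · right
      have hW2 : W i 2 = W i 0 := by simp [W, f, σ, hca, mul_right_comm γ]
      have hW3 : W i 3 = W i 0 := by simp [W, f, σ, hda, mul_right_comm δ]
      simp only [signMatrix, map_apply, hW2, hW3, and_self]
  have hZW : (signMatrix Z).submatrix id f = signMatrix W * diagonal fun k => ((σ k : ℤ) : ℝ) := by
    ext i k
    rcases Int.units_eq_one_or (σ k) with hk | hk <;> simp [signMatrix, W, hk]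
  have hf := hW.mul_diagonal (s := fun k => ((σ k : ℤ) : ℝ)) fun k => by
    rcases Int.units_eq_one_or (σ k) with hk | hk <;> simp [hk]
  rw [← hZW] at hf
  refine (hf.of_submatrix_embedding f (fun i j => (signMatrix_sq Z i j).le) (by norm_num)).mono
    (by norm_num [hn]) le_rfl

end AgreeingColumns

section SignDot

theorem exists_eq_of_abs_sum_eq_card {s : Finset m} {f : m → ℤˣ}
    (h : |∑ i ∈ s, (f i : ℤ)| = #s) : ∃ γ, ∀ i ∈ s, f i = γ := by
  have key (γ : ℤˣ) (hγ : (#s : ℤ) = γ * ∑ i ∈ s, (f i : ℤ)) : ∀ i ∈ s, f i = γ := by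
    have hsum : ∑ i ∈ s, (1 - (γ * f i : ℤ)) = 0 := by
      simp [← Finset.mul_sum, hγ]
    have hnonneg (i : m) : 0 ≤ 1 - (γ * f i : ℤ) := by
      rcases Int.units_eq_one_or (γ * f i) with hi | hi <;> simp [← Units.val_mul, hi]
    intro i hi
    have hone := (Finset.sum_eq_zero_iff_of_nonneg fun i _ => hnonneg i).1 hsum i hi
    have hone' : γ * f i = 1 := Units.ext (by push_cast; lia)
    rw [eq_inv_of_mul_eq_one_right hone', Int.units_inv_eq_self]
  rcases abs_choice (∑ i ∈ s, (f i : ℤ)) with hs | hs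
  · exact ⟨1, key 1 (by simp [← h, hs])⟩
  · exact ⟨-1, key (-1) (by simp [← h, hs])⟩

variable [Fintype m]

/-- The inner product of two sign vectors. -/
def signDot (u v : m → ℤˣ) : ℤ :=
  ∑ i, ((u i * v i : ℤˣ) : ℤ)

theorem signDot_comm (u v : m → ℤˣ) : signDot u v = signDot v u := by
  simp only [signDot, mul_comm]

theorem signDot_self (u : m → ℤˣ) : signDot u u = Fintype.card m := by
  simp [signDot]

theorem signDot_mul_left (β : ℤˣ) (u v : m → ℤˣ) :
    signDot (fun i => β * u i) v = β * signDot u v := by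
  simp only [signDot, mul_assoc, Units.val_mul, Finset.mul_sum]

theorem transpose_signMatrix_mul_self_apply (Z : Matrix m n ℤˣ) (a b : n) :
    ((signMatrix Z)ᵀ * signMatrix Z) a b = signDot (Z.col a) (Z.col b) := by
  simp [mul_apply, signMatrix, signDot]

theorem signDot_eq_card_sub (u v : m → ℤˣ) :
    signDot u v = Fintype.card m - 2 * #{i | u i ≠ v i} := by
  have hterm (i : m) : ((u i * v i : ℤˣ) : ℤ) = 1 - 2 * if u i ≠ v i then 1 else 0 := by
    rcases Int.units_eq_one_or (u i) with hu | hu <;>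
      rcases Int.units_eq_one_or (v i) with hv | hv <;> simp [hu, hv]
  simp only [signDot, hterm, Finset.sum_sub_distrib, ← Finset.mul_sum, Finset.sum_boole]
  simp

theorem signDot_sub_signDot (u v x : m → ℤˣ) :
    signDot u x - signDot v x = 2 * ∑ i with u i ≠ v i, ((u i * x i : ℤˣ) : ℤ) := by
  rw [signDot, signDot, ← Finset.sum_sub_distrib, Finset.sum_filter, Finset.mul_sum]
  refine Finset.sum_congr rfl fun i _ => ?_
  split_ifs with h
  · rw [Int.units_ne_iff_eq_neg.1 h, neg_mul, Units.val_neg]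
    ring
  · rw [not_not.1 h, sub_self, mul_zero]

theorem prod_mul_prod_eq_neg_one_pow (u v : m → ℤˣ) :
    (∏ i, u i) * ∏ i, v i = (-1) ^ #{i | u i ≠ v i} := by
  rw [← Finset.prod_mul_distrib, ← Finset.prod_const, Finset.prod_filter]
  refine Finset.prod_congr rfl fun i _ => ?_
  split_ifs with h
  · rw [Int.units_ne_iff_eq_neg.1 h, neg_mul, Int.units_mul_self]
  · rw [not_not.1 h, Int.units_mul_self]

theorem prod_eq_prod_iff_even_card (u v : m → ℤˣ) :
    ∏ i, u i = ∏ i, v i ↔ Even #{i | u i ≠ v i} := by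
  rw [← neg_one_pow_eq_one_iff_even (R := ℤˣ) (by decide), ← prod_mul_prod_eq_neg_one_pow,
    mul_eq_one_iff_eq_inv, Int.units_inv_eq_self]

/-- The sign of the inner product of two sign vectors, as a unit; it is `1` on orthogonal vectors,
so it carries no information there. -/
def dotSign (u v : m → ℤˣ) : ℤˣ :=
  if 0 ≤ signDot u v then 1 else -1

theorem dotSign_comm (u v : m → ℤˣ) : dotSign u v = dotSign v u := by
  simp only [dotSign, signDot_comm]

theorem signDot_eq_two_mul_dotSign (hm : Fintype.card m = 6) {u v : m → ℤˣ}
    (h : |signDot u v| < 4) (huv : ∏ i, u i = ∏ i, v i) : signDot u v = 2 * dotSign u v := by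
  obtain ⟨k, hk⟩ := (prod_eq_prod_iff_even_card u v).1 huv
  have hdot := signDot_eq_card_sub u v
  rw [hm, hk, Nat.cast_ofNat] at hdot
  rw [abs_lt] at h
  unfold dotSign
  split_ifs with h0
  · rw [Units.val_one]
    lia
  · rw [Units.val_neg, Units.val_one]
    lia

theorem signDot_eq_zero (hm : Fintype.card m = 6) {u v : m → ℤˣ} (h : |signDot u v| < 4)
    (huv : ∏ i, u i ≠ ∏ i, v i) : signDot u v = 0 := by
  obtain ⟨k, hk⟩ := Nat.not_even_iff_odd.1 ((prod_eq_prod_iff_even_card u v).not.1 huv)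
  rw [signDot_eq_card_sub, hm] at h ⊢
  grind

theorem exists_agree_or_proportional {u v x : m → ℤˣ}
    (h : |signDot u x - signDot v x| = 2 * #{i | u i ≠ v i}) :
    ∃ γ : ℤˣ, ∀ i, u i = v i ∨ x i = γ * u i := by
  rw [signDot_sub_signDot, abs_mul, abs_two] at h
  obtain ⟨γ, hγ⟩ := exists_eq_of_abs_sum_eq_card (mul_left_cancel₀ two_ne_zero h)
  refine ⟨γ, fun i => or_iff_not_imp_left.2 fun hi => ?_⟩
  rw [← hγ i (by simpa using hi), mul_right_comm, Int.units_mul_self, one_mul]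

theorem exists_agree_or_proportional_of_card_le_one {u v : m → ℤˣ} (h : #{i | u i ≠ v i} ≤ 1)
    (x : m → ℤˣ) : ∃ γ : ℤˣ, ∀ i, u i = v i ∨ x i = γ * u i := by
  refine exists_agree_or_proportional ?_
  rw [signDot_sub_signDot, abs_mul, abs_two]
  rcases Nat.le_one_iff_eq_zero_or_eq_one.1 h with h0 | h1
  · simp only [Finset.card_eq_zero.1 h0, Finset.sum_empty, Finset.card_empty, abs_zero,
      Nat.cast_zero]
  · obtain ⟨i, hi⟩ := Finset.card_eq_one.1 h1
    simp only [hi, Finset.sum_singleton, Finset.card_singleton, Nat.cast_one,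
      Int.isUnit_iff_abs_eq.1 (u i * x i).isUnit]

theorem exists_agree_or_proportional_of_triangle (hm : Fintype.card m = 6) {u v x : m → ℤˣ}
    {p q r : ℤˣ} (huv : signDot u v = 2 * p) (hvx : signDot v x = 2 * q)
    (hux : signDot u x = 2 * r) (hpqr : p * q * r = -1) :
    ∃ γ : ℤˣ, ∀ i, u i = p * v i ∨ x i = γ * u i := by
  refine exists_agree_or_proportional (v := fun i => p * v i) ?_
  have hdiff : #{i | u i ≠ p * v i} = 2 := by
    have hu : signDot u (fun i => p * v i) = 2 := by
      rw [signDot_comm, signDot_mul_left, signDot_comm, huv, mul_left_comm, ← Units.val_mul,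
        Int.units_mul_self, Units.val_one, mul_one]
    rw [signDot_eq_card_sub, hm] at hu
    lia
  have hqr : p * q = -r := by
    rw [eq_mul_inv_of_mul_eq hpqr, Int.units_inv_eq_self, neg_one_mul]
  rw [hdiff, signDot_mul_left, hux, hvx, mul_left_comm, ← Units.val_mul, hqr, Units.val_neg,
    mul_neg, sub_neg_eq_add, ← two_mul, abs_mul, abs_mul, Int.isUnit_iff_abs_eq.1 r.isUnit]
  rfl

theorem HasSchurFactorization.of_four_le_abs_signDot [Fintype n] (hm : Fintype.card m = 6)
    (hn : Fintype.card n = 6) {Z : Matrix m n ℤˣ} {a b : n} (hab : a ≠ b)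
    (h : 4 ≤ |signDot (Z.col a) (Z.col b)|) :
    HasSchurFactorization (31 / 13) (31 / 13) (signMatrix Z) := by
  classical
  obtain ⟨β, hβ⟩ : ∃ β : ℤˣ, 4 ≤ β * signDot (Z.col b) (Z.col a) := by
    rw [signDot_comm] at h
    rcases le_abs'.1 h with h' | h'
    · exact ⟨-1, by simpa using le_neg_of_le_neg h'⟩
    · exact ⟨1, by simpa using h'⟩
  have hdiff : #{i | Z.col a i ≠ β * Z.col b i} ≤ 1 := by
    rw [← signDot_mul_left, signDot_comm, signDot_eq_card_sub, hm, Nat.cast_ofNat] at hβ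
    lia
  obtain ⟨c, hc, d, hd, hcd⟩ : ∃ c ∈ ({a, b}ᶜ : Finset n), ∃ d ∈ ({a, b}ᶜ : Finset n), c ≠ d := by
    refine Finset.one_lt_card.1 ?_
    rw [Finset.card_compl, hn, Finset.card_pair hab]
    norm_num
  simp only [Finset.mem_compl, Finset.mem_insert, Finset.mem_singleton, not_or] at hc hd
  have habcd : [a, b, c, d].Nodup := by
    simp [hab, hcd, hc.1, hc.2, hd.1, hd.2, Ne.symm]
  exact of_agreeing_columns hn habcd β
    (exists_agree_or_proportional_of_card_le_one hdiff (Z.col c))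
    (exists_agree_or_proportional_of_card_le_one hdiff (Z.col d))

theorem HasSchurFactorization.of_negative_triangles [Fintype n] (hm : Fintype.card m = 6)
    (hn : Fintype.card n = 6) {Z : Matrix m n ℤˣ} {s : n → n → ℤˣ} {S : Finset n}
    (hs : ∀ j ∈ S, ∀ k ∈ S, j ≠ k → signDot (Z.col j) (Z.col k) = 2 * s j k)
    {a b c d : n} (ha : a ∈ S) (hb : b ∈ S) (hc : c ∈ S) (hd : d ∈ S)
    (habcd : [a, b, c, d].Nodup) (habc : s a b * s b c * s a c = -1)
    (habd : s a b * s b d * s a d = -1) :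
    HasSchurFactorization (31 / 13) (31 / 13) (signMatrix Z) := by
  have hnodup := habcd
  simp only [List.nodup_cons, List.mem_cons, List.not_mem_nil, or_false, not_or] at hnodup
  obtain ⟨⟨hab, hac, had⟩, ⟨hbc, hbd⟩, -⟩ := hnodup
  exact of_agreeing_columns hn habcd (s a b)
    (exists_agree_or_proportional_of_triangle hm (hs a ha b hb hab) (hs b hb c hc hbc)
      (hs a ha c hc hac) habc)
    (exists_agree_or_proportional_of_triangle hm (hs a ha b hb hab) (hs b hb d hd hbd)
      (hs a ha d hd had) habd)

end SignDot

section SignedGraph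

theorem exists_switching_of_triangle_sign {s : n → n → ℤˣ} (hs : ∀ a b, s a b = s b a)
    {S : Finset n} {ε : ℤˣ} (h : ∀ a ∈ S, ∀ b ∈ S, ∀ c ∈ S, [a, b, c].Nodup →
      s a b * s b c * s a c = ε) :
    ∃ σ : n → ℤˣ, ∀ a ∈ S, ∀ b ∈ S, a ≠ b → s a b = ε * σ a * σ b := by
  classical
  obtain rfl | ⟨o, ho⟩ := S.eq_empty_or_nonempty
  · exact ⟨1, by simp⟩
  refine ⟨fun a => if a = o then 1 else ε * s o a, fun a ha b hb hab => ?_⟩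
  rcases eq_or_ne a o with rfl | hao
  · simp [hab.symm, ← mul_assoc]
  rcases eq_or_ne b o with rfl | hbo
  · simp [hab, ← mul_assoc, hs]
  have solve : ∀ x y z w : ℤˣ, x * y * z = w → y = w * (w * x) * (w * z) := by decide
  simpa [hao, hbo] using solve _ _ _ _ (h o ho a ha b hb (by simp [hab, hao.symm, hbo.symm]))

theorem triangle_sign_of_disjoint_negative_triangles {s : n → n → ℤˣ}
    (hs : ∀ a b, s a b = s b a) {S : Finset n}
    (h : ∀ a ∈ S, ∀ b ∈ S, ∀ c ∈ S, ∀ d ∈ S, [a, b, c, d].Nodup →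
      s a b * s b c * s a c = 1 ∨ s a b * s b d * s a d = 1) :
    ∃ ε : ℤˣ, (ε = 1 ∨ ε = -1 ∧ #S = 3) ∧
      ∀ a ∈ S, ∀ b ∈ S, ∀ c ∈ S, [a, b, c].Nodup → s a b * s b c * s a c = ε := by
  classical
  by_cases hneg : ∃ a ∈ S, ∃ b ∈ S, ∃ c ∈ S, [a, b, c].Nodup ∧ s a b * s b c * s a c = -1
  · obtain ⟨a, ha, b, hb, c, hc, habc, hsabc⟩ := hneg
    simp only [List.nodup_cons, List.mem_cons, List.not_mem_nil, or_false, not_or,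
      not_false_eq_true, List.nodup_nil, and_true] at habc
    obtain ⟨⟨hab, hac⟩, hbc⟩ := habc
    have four_triangles : ∀ x y z u v w : ℤˣ, x * y * z = -1 → (x * y * z = 1 ∨ x * v * u = 1) →
      (z * y * x = 1 ∨ z * w * u = 1) → (y * z * x = 1 ∨ y * w * v = 1) → False := by decide
    have hS : S = {a, b, c} := by
      refine Finset.Subset.antisymm (fun d hd => ?_) (by simp [Finset.insert_subset_iff, *])
      by_contra hmem
      simp only [Finset.mem_insert, Finset.mem_singleton, not_or] at hmem
      obtain ⟨hda, hdb, hdc⟩ := hmem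
      have h1 := h a ha b hb c hc d hd (by simp [*, Ne.symm])
      have h2 := h a ha c hc b hb d hd (by simp [*, Ne.symm])
      have h3 := h b hb c hc a ha d hd (by simp [*, Ne.symm])
      rw [hs c b] at h2
      rw [hs c a, hs b a] at h3
      exact four_triangles _ _ _ _ _ _ hsabc h1 h2 h3
    refine ⟨-1, Or.inr ⟨rfl, hS ▸ Finset.card_eq_three.2 ⟨a, b, c, hab, hac, hbc, rfl⟩⟩, ?_⟩
    simp only [hS, Finset.mem_insert, Finset.mem_singleton]
    intro x hx y hy z hz hxyz
    rw [← hsabc]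
    rcases hx with hx | hx | hx <;> rcases hy with hy | hy | hy <;> rcases hz with hz | hz | hz <;>
      first
      | simp [hx, hy, hz] at hxyz; done
      | simp only [hx, hy, hz, hs b a, hs c a, hs c b, mul_comm, mul_left_comm]
  · push Not at hneg
    exact ⟨1, Or.inl rfl, fun a ha b hb c hc habc =>
      (Int.units_eq_one_or _).resolve_right (hneg a ha b hb c hc habc)⟩

end SignedGraph

section Reduction

theorem HasSchurFactorization.of_signDot {Z : Matrix (Fin 6) (Fin 6) ℤˣ} {b : Fin 6 → ℤˣ}
    {σ : Fin 6 → ℤˣ} (ε : ℤˣ → ℤˣ) (hε : ∀ c, ε c = 1 ∨ ε c = -1 ∧ #{j | b j = c} = 3)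
    (hZ : ∀ j k, j ≠ k → signDot (Z.col j) (Z.col k) =
      if b j = b k then 2 * ((ε (b k) * σ j * σ k : ℤˣ) : ℤ) else 0) :
    HasSchurFactorization ((4 + √10) / 3) ((4 + √10) / 3) (signMatrix Z) := by
  let W : Matrix (Fin 6) (Fin 6) ℤˣ := of fun i j => σ j * Z i j
  have hcol (j : Fin 6) : W.col j = fun i => σ j * Z.col j i := rfl
  have hW (j k : Fin 6) :
      signDot (W.col j) (W.col k) = σ j * (σ k * signDot (Z.col j) (Z.col k)) := by
    rw [hcol, hcol, signDot_mul_left, signDot_comm, signDot_mul_left, signDot_comm]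
  have hgram : (signMatrix W)ᵀ * signMatrix W = blockMatrix b (fun c => 6 - 2 * ((ε c : ℤ) : ℝ))
      fun c => 6 - 2 * ((ε c : ℤ) : ℝ) + 2 * ((ε c : ℤ) : ℝ) * #{j | b j = c} := by
    ext j k
    rw [transpose_signMatrix_mul_self_apply, blockMatrix_apply]
    rcases eq_or_ne j k with rfl | hjk
    · have hcard : (#{k | b k = b j} : ℝ) ≠ 0 :=
        Nat.cast_ne_zero.2 (Finset.card_ne_zero_of_mem (a := j) (by simp))
      simp [signDot_self, hcard]
    rw [hW, hZ j k hjk, if_neg hjk]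
    by_cases hb : b j = b k
    · have hcard : (#{l | b l = b k} : ℝ) ≠ 0 :=
        Nat.cast_ne_zero.2 (Finset.card_ne_zero_of_mem (a := k) (by simp))
      rcases Int.units_eq_one_or (σ j) with hj | hj <;>
        rcases Int.units_eq_one_or (σ k) with hk | hk <;> simp [hb, hj, hk, hcard]
    · simp [hb]
  have hZW : signMatrix Z = signMatrix W * diagonal fun j => ((σ j : ℤ) : ℝ) := by
    ext i j
    rcases Int.units_eq_one_or (σ j) with hj | hj <;> simp [signMatrix, W, hj]
  rw [hZW]
  refine (of_gram ε hε hgram).mul_diagonal fun j => ?_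
  rcases Int.units_eq_one_or (σ j) with hj | hj <;> simp [hj]

theorem HasSchurFactorization.signMatrix_fin_six (Z : Matrix (Fin 6) (Fin 6) ℤˣ) :
    HasSchurFactorization ((4 + √10) / 3) ((4 + √10) / 3) (signMatrix Z) := by
  have hm : Fintype.card (Fin 6) = 6 := Fintype.card_fin 6
  by_contra hZ
  have hsmall (j k : Fin 6) (hjk : j ≠ k) : |signDot (Z.col j) (Z.col k)| < 4 := by
    by_contra! h
    exact hZ ((of_four_le_abs_signDot hm hm hjk h).mono
      thirtyOne_div_thirteen_le thirtyOne_div_thirteen_le)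
  let b (j : Fin 6) : ℤˣ := ∏ i, Z i j
  let s (j k : Fin 6) : ℤˣ := dotSign (Z.col j) (Z.col k)
  have hs (j k : Fin 6) (hjk : j ≠ k) (hb : b j = b k) : signDot (Z.col j) (Z.col k) = 2 * s j k :=
    signDot_eq_two_mul_dotSign hm (hsmall j k hjk) hb
  have hswitch (c : ℤˣ) : ∃ ε : ℤˣ, (ε = 1 ∨ ε = -1 ∧ #{j | b j = c} = 3) ∧
      ∃ σ : Fin 6 → ℤˣ, ∀ j k, j ≠ k → b j = c → b k = c → s j k = ε * σ j * σ k := by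
    have hcomm (j k : Fin 6) : s j k = s k j := dotSign_comm _ _
    obtain ⟨ε, hε, htri⟩ := triangle_sign_of_disjoint_negative_triangles hcomm
      (S := {j | b j = c}) fun p hp q hq r hr t ht hpqrt => by
        by_contra! h
        refine hZ ((of_negative_triangles hm hm (fun j hj k hk hjk => hs j k hjk ?_) hp hq hr ht
          hpqrt ((Int.units_eq_one_or _).resolve_left h.1)
          ((Int.units_eq_one_or _).resolve_left h.2)).mono
          thirtyOne_div_thirteen_le thirtyOne_div_thirteen_le)
        rw [(Finset.mem_filter.1 hj).2, (Finset.mem_filter.1 hk).2]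
    obtain ⟨σ, hσ⟩ := exists_switching_of_triangle_sign hcomm htri
    exact ⟨ε, hε, σ, fun j k hjk hj hk => hσ j (by simpa) k (by simpa) hjk⟩
  choose ε hε σ hσ using hswitch
  refine hZ (of_signDot (b := b) (σ := fun j => σ (b j) j) ε hε fun j k hjk => ?_)
  split_ifs with hb
  · rw [hs j k hjk hb, hσ (b k) j k hjk hb rfl, hb]
  · exact signDot_eq_zero hm (hsmall j k hjk) hb

end Reduction

section UpperBound

theorem mem_convexHull_signMatrix [Finite m] [Finite n] {M : Matrix m n ℝ}
    (hM : ∀ i j, |M i j| ≤ 1) :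
    M ∈ convexHull ℝ (Set.range (signMatrix : Matrix m n ℤˣ → Matrix m n ℝ)) := by
  let cube : Set (m → n → ℝ) := Set.univ.pi fun _ => Set.univ.pi fun _ => {-1, 1}
  have hcube : cube ⊆ Set.range (signMatrix : Matrix m n ℤˣ → Matrix m n ℝ) := by
    intro N hN
    have hentry (i : m) (j : n) : ∃ u : ℤˣ, ((u : ℤ) : ℝ) = N i j := by
      rcases hN i trivial j trivial with h | h
      · exact ⟨-1, by simp [h]⟩
      · exact ⟨1, by simp [h.symm]⟩
    choose Z hZ using hentry
    exact ⟨Z, funext₂ hZ⟩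
  have hM_cube : (fun i j => M i j) ∈ convexHull ℝ cube := by
    simp only [cube, convexHull_pi, convexHull_pair]
    intro i _ j _
    rw [segment_eq_Icc (by norm_num)]
    exact abs_le.1 (hM i j)
  exact convexHull_mono hcube hM_cube

theorem exists_norm_hadamard_le_signMatrix [Fintype m] [Fintype n] [DecidableEq n]
    {M : Matrix m n ℝ} (hM : ∀ i j, |M i j| ≤ 1) (C : Matrix m n ℂ) :
    ∃ Z : Matrix m n ℤˣ, ‖M.map Complex.ofReal ⊙ C‖ ≤ ‖(signMatrix Z).map Complex.ofReal ⊙ C‖ := by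
  let L : Matrix m n ℝ →ₗ[ℝ] Matrix m n ℂ :=
    { toFun := fun M => M.map Complex.ofReal ⊙ C
      map_add' := fun M N => by ext; simp [add_mul]
      map_smul' := fun r M => by ext; simp [mul_assoc] }
  have hconv : ConvexOn ℝ Set.univ fun M => ‖L M‖ := convexOn_univ_norm.comp_linearMap L
  obtain ⟨_, ⟨Z, rfl⟩, hZ⟩ := hconv.exists_ge_of_mem_convexHull (Set.subset_univ _)
    (mem_convexHull_signMatrix hM)
  exact ⟨Z, hZ⟩

theorem copNorm_eq_norm [Fintype m] [Fintype n] [DecidableEq n] (C : Matrix m n ℂ) :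
    copNorm C = ‖C‖ :=
  (l2_opNorm_def C).symm

theorem copNorm_hadamard_le {M : Matrix (Fin 6) (Fin 6) ℝ} (hM : ∀ i j, |M i j| ≤ 1)
    {C : Matrix (Fin 6) (Fin 6) ℂ} (hC : copNorm C ≤ 1) :
    copNorm (M.map Complex.ofReal ⊙ C) ≤ (4 + √10) / 3 := by
  rw [copNorm_eq_norm] at hC ⊢
  obtain ⟨Z, hZ⟩ := exists_norm_hadamard_le_signMatrix hM C
  calc ‖M.map Complex.ofReal ⊙ C‖ ≤ ‖(signMatrix Z).map Complex.ofReal ⊙ C‖ := hZ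
    _ ≤ √((4 + √10) / 3) * √((4 + √10) / 3) * ‖C‖ :=
        (HasSchurFactorization.signMatrix_fin_six Z).norm_hadamard_le C
    _ ≤ (4 + √10) / 3 := by
        rw [Real.mul_self_sqrt (by positivity)]
        exact mul_le_of_le_one_right (by positivity) hC

theorem schurNorm_le_s15 {M : Matrix (Fin 6) (Fin 6) ℝ} (hM : ∀ i j, |M i j| ≤ 1) :
    schurNorm (M.map Complex.ofReal) ≤ (4 + √10) / 3 := by
  refine Real.sSup_le ?_ (by positivity)
  rintro _ ⟨C, hC, rfl⟩
  exact copNorm_hadamard_le hM hC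

end UpperBound

section LowerBound

/-- A `±1` matrix of maximal determinant, at which `rSchur 6` is attained. -/
def maxDetMatrix : Matrix (Fin 6) (Fin 6) ℝ :=
  !![-1, 1, 1, 1, 1, 1; 1, -1, 1, 1, 1, 1; 1, 1, -1, 1, 1, 1;
     -1, -1, -1, -1, 1, 1; -1, -1, -1, 1, -1, 1; -1, -1, -1, 1, 1, -1]

/-- The matrix with the block pattern of `maxDetMatrix` and entries `x`, `y`, `±z`; for suitable
values it is the orthogonal polar factor of `maxDetMatrix`. -/
def circulantBlocks (x y z : ℝ) : Matrix (Fin 6) (Fin 6) ℝ :=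
  !![x, y, y, z, z, z; y, x, y, z, z, z; y, y, x, z, z, z;
     -z, -z, -z, x, y, y; -z, -z, -z, y, x, y; -z, -z, -z, y, y, x]

theorem circulantBlocks_mem_orthogonalGroup {x y z : ℝ} (hdiag : x ^ 2 + 2 * y ^ 2 + 3 * z ^ 2 = 1)
    (hoff : 2 * x * y + y ^ 2 + 3 * z ^ 2 = 0) :
    circulantBlocks x y z ∈ orthogonalGroup (Fin 6) ℝ := by
  rw [mem_orthogonalGroup_iff']
  ext i j
  fin_cases i <;> fin_cases j <;>
    simp [circulantBlocks, mul_apply, Fin.sum_univ_six] <;> linarith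

theorem norm_map_ofReal_le_one_of_mem_orthogonalGroup [Fintype n] [DecidableEq n]
    {U : Matrix n n ℝ} (hU : U ∈ orthogonalGroup n ℝ) : ‖U.map Complex.ofReal‖ ≤ 1 := by
  have hstar : (U.map Complex.ofReal)ᴴ * U.map Complex.ofReal = 1 := by
    have hmap := congrArg (·.map Complex.ofRealHom) (mem_orthogonalGroup_iff' n ℝ |>.1 hU)
    rw [Matrix.map_mul, Matrix.map_one _ (map_zero _) (map_one _)] at hmap
    rw [← hmap]
    congr 1
    ext i j
    simp
  cases subsingleton_or_nontrivial (Matrix n n ℂ)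
  · simp [Subsingleton.elim (U.map Complex.ofReal) 0]
  · exact (CStarRing.norm_of_mem_unitary (mem_unitaryGroup_iff'.2 hstar)).le

theorem le_norm_of_row_sum_eq [Fintype n] [DecidableEq n] [Nonempty n] {C : Matrix n n ℂ} {c : ℝ}
    (hc : 0 ≤ c) (h : ∀ i, ∑ j, C i j = c) : c ≤ ‖C‖ := by
  let v : EuclideanSpace ℂ n := WithLp.toLp 2 1
  have hv : 0 < ‖v‖ := norm_pos_iff.2 fun h0 => one_ne_zero (congrArg WithLp.ofLp h0)
  have heigen : (EuclideanSpace.equiv n ℂ).symm (C *ᵥ v) = (c : ℂ) • v := by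
    ext i
    simp [mulVec, dotProduct, v, h]
  have hCv := l2_opNorm_mulVec C v
  rw [heigen, norm_smul, Complex.norm_of_nonneg hc] at hCv
  exact le_of_mul_le_mul_right hCv hv

theorem exists_le_copNorm_hadamard_maxDetMatrix : ∃ C : Matrix (Fin 6) (Fin 6) ℂ, copNorm C ≤ 1 ∧
    (4 + √10) / 3 ≤ copNorm (maxDetMatrix.map Complex.ofReal ⊙ C) := by
  simp only [copNorm_eq_norm]
  have hsq : √10 ^ 2 = 10 := Real.sq_sqrt (by norm_num)
  have hU : circulantBlocks ((√10 - 20) / 30) ((√10 + 10) / 30) (√10 / 10) ∈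
      orthogonalGroup (Fin 6) ℝ :=
    circulantBlocks_mem_orthogonalGroup (by linear_combination hsq / 30)
      (by linear_combination hsq / 30)
  refine ⟨_, norm_map_ofReal_le_one_of_mem_orthogonalGroup hU,
    le_norm_of_row_sum_eq (by positivity) fun i => ?_⟩
  fin_cases i <;> simp [Fin.sum_univ_six, maxDetMatrix, circulantBlocks] <;> ring

theorem abs_maxDetMatrix_le (i j : Fin 6) : |maxDetMatrix i j| ≤ 1 := by
  fin_cases i <;> fin_cases j <;> simp [maxDetMatrix]

theorem le_schurNorm_maxDetMatrix :
    (4 + √10) / 3 ≤ schurNorm (maxDetMatrix.map Complex.ofReal) := by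
  obtain ⟨C, hC, hle⟩ := exists_le_copNorm_hadamard_maxDetMatrix
  refine hle.trans (le_csSup ⟨(4 + √10) / 3, ?_⟩ ⟨C, hC, rfl⟩)
  rintro _ ⟨C', hC', rfl⟩
  exact copNorm_hadamard_le abs_maxDetMatrix_le hC'

end LowerBound

/-- `r 6 = (4 + √10) / 3`. -/
theorem rSchur_six : rSchur 6 = (4 + Real.sqrt 10) / 3 := by
  have hupper : ∀ x ∈ {x | ∃ M : Matrix (Fin 6) (Fin 6) ℝ, (∀ i j, |M i j| ≤ 1) ∧
      x = schurNorm (M.map Complex.ofReal)}, x ≤ (4 + √10) / 3 := by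
    rintro _ ⟨M, hM, rfl⟩
    exact schurNorm_le_s15 hM
  apply le_antisymm
  · exact Real.sSup_le hupper (by positivity)
  · exact le_schurNorm_maxDetMatrix.trans
      (le_csSup ⟨_, hupper⟩ ⟨maxDetMatrix, abs_maxDetMatrix_le, rfl⟩)
end
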